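/- arXiv:1009.4379 — 3 statements merged into one kernel-verified Lean document; each statement's English description precedes it below -/
import Mathlib

section
/- Let Γ be a countable group with Property (Fab) and ζ ∈ Z²(Γ,T) a normalised multiplier. If the minisocle MS(Γ) has an irreducible Γ-P-faithful ζ-representation (with respect to the restriction of ζ to MS(Γ) × MS(Γ)), then Γ has a ζ-representation which is both irreducible and projectively faithful. -/
/-- A projective unitary representation: a map into the unitary operators sending `1` to `id`
whose composition with the quotient by the circle is a homomorphism. -/
def IsProjUnitaryRep {G : Type*} [Group G] {H : Type*} [NormedAddCommGroup H]
    [InnerProductSpace ℂ H] [CompleteSpace H] (π : G → (H →L[ℂ] H)) : Prop :=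
  (∀ x, π x ∈ unitary (H →L[ℂ] H)) ∧ π 1 = 1 ∧
    ∀ x y, ∃ z : Circle, π x * π y = (z : ℂ) • π (x * y)

/-- The projective kernel of a projective representation. -/
def ProjKer {G : Type*} [Group G] {H : Type*} [NormedAddCommGroup H]
    [InnerProductSpace ℂ H] [CompleteSpace H] (π : G → (H →L[ℂ] H)) : Set G :=
  {x | ∃ z : Circle, π x = (z : ℂ) • (1 : H →L[ℂ] H)}

/-- Projective faithfulness. -/
def PFaithful {G : Type*} [Group G] {H : Type*} [NormedAddCommGroup H]
    [InnerProductSpace ℂ H] [CompleteSpace H] (π : G → (H →L[ℂ] H)) : Prop :=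
  ∀ x, x ∈ ProjKer π → x = 1

/-- Irreducibility: the only closed invariant subspaces are `⊥` and `⊤`. -/
def IsIrreducibleRep {G : Type*} {H : Type*} [NormedAddCommGroup H]
    [InnerProductSpace ℂ H] [CompleteSpace H] (π : G → (H →L[ℂ] H)) : Prop :=
  ∀ K : Submodule ℂ H, IsClosed (K : Set H) → (∀ x, ∀ v ∈ K, π x v ∈ K) → K = ⊥ ∨ K = ⊤

/-- An (ordinary) unitary representation. -/
def IsUnitaryRep {G : Type*} [Group G] {H : Type*} [NormedAddCommGroup H]
    [InnerProductSpace ℂ H] [CompleteSpace H] (π : G → (H →L[ℂ] H)) : Prop :=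
  (∀ x, π x ∈ unitary (H →L[ℂ] H)) ∧ π 1 = 1 ∧ ∀ x y, π (x * y) = π x * π y

/-- A multiplier (2-cocycle) with values in the circle group. -/
def IsMultiplier {G : Type*} [Group G] (ζ : G → G → Circle) : Prop :=
  (∀ x, ζ 1 x = 1) ∧ (∀ x, ζ x 1 = 1) ∧
    ∀ x y z, ζ x y * ζ (x * y) z = ζ x (y * z) * ζ y z

/-- A normalised multiplier. -/
def IsNormalised {G : Type*} [Group G] (ζ : G → G → Circle) : Prop :=
  ∀ x : G, ζ x x⁻¹ = 1

/-- A ζ-representation of `G`. -/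
def IsZetaRep {G : Type*} [Group G] {H : Type*} [NormedAddCommGroup H]
    [InnerProductSpace ℂ H] [CompleteSpace H] (ζ : G → G → Circle)
    (π : G → (H →L[ℂ] H)) : Prop :=
  (∀ x, π x ∈ unitary (H →L[ℂ] H)) ∧ π 1 = 1 ∧
    ∀ x y, π x * π y = ((ζ x y : ℂ)) • π (x * y)

/-- A ζ-representation of a subgroup `N` of `G` (with respect to the restriction of ζ). -/
def IsZetaRepOn {G : Type*} [Group G] {H : Type*} [NormedAddCommGroup H]
    [InnerProductSpace ℂ H] [CompleteSpace H] (ζ : G → G → Circle) (N : Subgroup G)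
    (σ : N → (H →L[ℂ] H)) : Prop :=
  (∀ x, σ x ∈ unitary (H →L[ℂ] H)) ∧ σ 1 = 1 ∧
    ∀ x y : N, σ x * σ y = ((ζ (x : G) (y : G) : ℂ)) • σ (x * y)

open scoped Classical in
/-- The conjugate `σ^γ` of a projective representation `σ` of a (normal) subgroup `N`:
`σ^γ(x) = ζ(γ,x)·ζ(γx,γ⁻¹)·σ(γxγ⁻¹)`. -/
noncomputable def conjRep {G : Type*} [Group G] {H : Type*} [NormedAddCommGroup H]
    [InnerProductSpace ℂ H] [CompleteSpace H] (ζ : G → G → Circle) (N : Subgroup G)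
    (σ : N → (H →L[ℂ] H)) (γ : G) (x : N) : H →L[ℂ] H :=
  if h : γ * (x : G) * γ⁻¹ ∈ N then
    ((ζ γ (x : G) : ℂ) * (ζ (γ * (x : G)) γ⁻¹ : ℂ)) • σ ⟨γ * (x : G) * γ⁻¹, h⟩
  else 1

/-- `σ` is Γ-P-faithful: the projective Γ-kernel
`{x ∈ N : ∃ z ∈ T, σ^γ(x) = z·id for all γ}` is trivial. -/
def GammaPFaithful {G : Type*} [Group G] {H : Type*} [NormedAddCommGroup H]
    [InnerProductSpace ℂ H] [CompleteSpace H] (ζ : G → G → Circle) (N : Subgroup G)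
    (σ : N → (H →L[ℂ] H)) : Prop :=
  ∀ x : N, (∃ z : Circle, ∀ γ : G, conjRep ζ N σ γ x = (z : ℂ) • (1 : H →L[ℂ] H)) → x = 1

/-- A finite foot of `G`: a finite minimal (nontrivial) normal subgroup. -/
def IsFiniteFoot {G : Type*} [Group G] (N : Subgroup G) : Prop :=
  N.Normal ∧ N ≠ ⊥ ∧ (∀ M : Subgroup G, M.Normal → M ≠ ⊥ → M ≤ N → M = N) ∧ Finite N

/-- The minisocle: the subgroup generated by all finite feet. -/
def minisocle (G : Type*) [Group G] : Subgroup G :=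
  ⨆ (N : Subgroup G) (_ : IsFiniteFoot N), N

/-- Property (Fab): the normal subgroup generated by any single conjugacy class has finite
abelianisation. -/
def PropertyFab (G : Type*) [Group G] : Prop :=
  ∀ g : G, Finite (Abelianization (Subgroup.normalClosure ({g} : Set G)))

/-!
Normalised positive definite functions for `ζ` (`ζ`-states) form a compact convex set whose extreme
points are the vector states of irreducible `ζ`-representations. A vector state of an irreducible
Γ-P-faithful `σ` on a normal subgroup `N` extends to an extreme `ζ`-state of `Γ`. The GNS
representation of the extension contains `σ`, so its projective kernel meets `N` trivially. If `N`
contains all finite feet, then the normal closure `M` of a nontrivial element of that kernel is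
infinite, and the extension restricts to a `ζ`-character `χ` of `M`.

To avoid this for one pair `(M, χ)`, average against `χ` over a large finite subset of `M`: the
resulting nonnegative functional is small at the extension by zero, but equal to `1` at every state
extending `χ`. Property (Fab) leaves countably many pairs, so these functionals can be summed to a
lower semicontinuous concave function whose minimum is below `1`. By Bauer's minimum principle it
is attained at an extreme point, which then avoids all pairs at once.
-/

open scoped InnerProductSpace ComplexConjugate ComplexOrder

section Kernels

variable {X 𝕜 H H' : Type*} [RCLike 𝕜] [NormedAddCommGroup H] [InnerProductSpace 𝕜 H]
  [NormedAddCommGroup H'] [InnerProductSpace 𝕜 H']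

theorem sum_gram_eq_norm_sq (e : X → H) (c : X →₀ 𝕜) :
    (c.sum fun x a => c.sum fun y b => star a * Matrix.gram 𝕜 e x y * b) =
      (‖Finsupp.linearCombination 𝕜 e c‖ : 𝕜) ^ 2 := by
  rw [← inner_self_eq_norm_sq_to_K, Finsupp.linearCombination_apply, Finsupp.sum, Finsupp.sum,
    sum_inner]
  refine Finset.sum_congr rfl fun x _ => ?_
  rw [Finsupp.sum, inner_sum]
  refine Finset.sum_congr rfl fun y _ => ?_
  rw [inner_smul_left, inner_smul_right, Matrix.gram_apply, RCLike.star_def]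
  ring

theorem posSemidef_gram (e : X → H) : (Matrix.gram 𝕜 e).PosSemidef := by
  refine ⟨Matrix.isHermitian_gram 𝕜 e, fun c => ?_⟩
  rw [sum_gram_eq_norm_sq]
  exact_mod_cast sq_nonneg ‖Finsupp.linearCombination 𝕜 e c‖

theorem posSemidef_smul_one {k : Matrix X X 𝕜} (hk : k.PosSemidef) :
    (Matrix.of fun x y => k x y • (1 : 𝕜 →L[𝕜] 𝕜)).PosSemidef := by
  have htfae := (RKHS.posSemidef_tfae
    (K := Matrix.of fun x y => k x y • (1 : 𝕜 →L[𝕜] 𝕜))).out 0 2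
  refine htfae.2 ⟨?_, fun c => ?_⟩
  · refine Matrix.IsHermitian.ext fun x y => ?_
    simp only [Matrix.of_apply, star_smul, star_one, hk.1.apply]
  · refine (RCLike.nonneg_iff.1 (hk.2 c)).1.trans_eq (congrArg RCLike.re
      (Finsupp.sum_congr fun x _ => Finsupp.sum_congr fun y _ => ?_))
    simp only [Matrix.of_apply, smul_apply, one_apply_eq_self, smul_eq_mul,
      RCLike.inner_apply, map_mul, starRingEnd_apply, hk.1.apply]
    ring

/-- Kolmogorov decomposition. -/
theorem exists_gram_eq_of_posSemidef.{u} {X : Type u} {k : Matrix X X ℂ} (hk : k.PosSemidef) :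
    ∃ (H : Type u) (_ : NormedAddCommGroup H) (_ : InnerProductSpace ℂ H) (_ : CompleteSpace H)
      (e : X → H), Matrix.gram ℂ e = k ∧ Dense (Submodule.span ℂ (Set.range e) : Set H) := by
  have : Fact _ := ⟨posSemidef_smul_one hk⟩
  let F := RKHS.OfKernel (Matrix.of fun x y => k x y • (1 : ℂ →L[ℂ] ℂ))
  refine ⟨F, inferInstance, inferInstance, inferInstance,
    fun x => RKHS.kerFun F x 1, ?_, ?_⟩
  · ext x y
    rw [Matrix.gram_apply, RKHS.kerFun_inner, RKHS.kerFun_apply, RKHS.OfKernel.kernel_ofKernel]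
    simp
  · refine (Submodule.dense_iff_topologicalClosure_eq_top.2 (RKHS.kerFun_dense F)).mono
      (Submodule.span_le.2 ?_)
    rintro _ ⟨x, z, rfl⟩
    rw [← mul_one z, ← smul_eq_mul, map_smul]
    exact Submodule.smul_mem _ _ (Submodule.subset_span ⟨x, rfl⟩)

theorem denseRange_linearCombination {e : X → H}
    (he : Dense (Submodule.span 𝕜 (Set.range e) : Set H)) :
    DenseRange (Finsupp.linearCombination 𝕜 e) := by
  rwa [DenseRange, ← LinearMap.coe_range, Finsupp.range_linearCombination]

theorem exists_clm_of_norm_le [CompleteSpace H'] {e : X → H} {e' : X → H'}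
    (he : Dense (Submodule.span 𝕜 (Set.range e) : Set H)) (C : ℝ)
    (hC : ∀ c : X →₀ 𝕜, ‖Finsupp.linearCombination 𝕜 e' c‖ ≤
      C * ‖Finsupp.linearCombination 𝕜 e c‖) :
    ∃ S : H →L[𝕜] H', ∀ x, S (e x) = e' x := by
  have hdense := denseRange_linearCombination he
  refine ⟨(Finsupp.linearCombination 𝕜 e').extendOfNorm (Finsupp.linearCombination 𝕜 e),
    fun x => ?_⟩
  simpa using LinearMap.extendOfNorm_eq hdense ⟨C, hC⟩ (Finsupp.single x 1)

theorem clm_ext_of_dense_span {e : X → H}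
    (he : Dense (Submodule.span 𝕜 (Set.range e) : Set H)) {S T : H →L[𝕜] H'}
    (h : ∀ x, S (e x) = T (e x)) : S = T :=
  ContinuousLinearMap.ext_on he (Set.forall_mem_range.2 h)

theorem eq_of_inner_left_of_dense_span {e : X → H}
    (he : Dense (Submodule.span 𝕜 (Set.range e) : Set H)) {v w : H}
    (h : ∀ x, inner 𝕜 v (e x) = inner 𝕜 w (e x)) : v = w :=
  innerSL_inj.1 (clm_ext_of_dense_span he h)

theorem exists_isometry_of_gram_eq [CompleteSpace H'] {e : X → H} {e' : X → H'}
    (he : Dense (Submodule.span 𝕜 (Set.range e) : Set H))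
    (hgram : Matrix.gram 𝕜 e' = Matrix.gram 𝕜 e) :
    ∃ S : H →L[𝕜] H', (∀ u v, inner 𝕜 (S u) (S v) = inner 𝕜 u v) ∧ ∀ x, S (e x) = e' x := by
  have hnorm (c : X →₀ 𝕜) :
      ‖Finsupp.linearCombination 𝕜 e' c‖ = ‖Finsupp.linearCombination 𝕜 e c‖ := by
    rw [← sq_eq_sq₀ (norm_nonneg _) (norm_nonneg _)]
    have := sum_gram_eq_norm_sq e' c
    rw [hgram, sum_gram_eq_norm_sq] at this
    exact_mod_cast this.symm
  obtain ⟨S, hS⟩ := exists_clm_of_norm_le he 1 fun c => by rw [one_mul, hnorm c]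
  have hSnorm (u : H) : ‖S u‖ = ‖u‖ := by
    refine (denseRange_linearCombination he).induction_on u
      (isClosed_eq (by fun_prop) (by fun_prop)) fun c => ?_
    rw [← hnorm c]
    simp only [Finsupp.linearCombination_apply, map_finsuppSum, map_smul, hS]
  exact ⟨S, (LinearMap.norm_map_iff_inner_map_map S).1 hSnorm, hS⟩

end Kernels

section ZetaKernels

variable {G : Type*} [Group G] {ζ : G → G → Circle}

/-- The kernel `(x, y) ↦ conj ζ(x, x⁻¹y) · φ(x⁻¹y)` of a function `φ` on the group. If `φ` is the
coefficient `x ↦ ⟪v, π x v⟫` of a `ζ`-representation, this is the Gram matrix of `x ↦ π x v`. -/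
noncomputable def zetaKernel (ζ : G → G → Circle) (φ : G → ℂ) : Matrix G G ℂ :=
  Matrix.of fun x y => ((ζ x (x⁻¹ * y))⁻¹ : Circle) * φ (x⁻¹ * y)

/-- The states of the `ζ`-twisted group algebra, encoded as the normalised `ζ`-positive-definite
functions on the group. -/
def zetaStates (ζ : G → G → Circle) : Set (G → ℂ) :=
  {φ | φ 1 = 1 ∧ (zetaKernel ζ φ).PosSemidef}

/-- The quadratic form of `zetaKernel ζ φ` at `c`, as a real functional of `φ`: the value of the
functional `φ` at the positive element `c⋆ * c` of the `ζ`-twisted group algebra. -/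
noncomputable def zetaForm (ζ : G → G → Circle) (c : G →₀ ℂ) : (G → ℂ) →L[ℝ] ℝ where
  toFun φ := (c.sum fun x a => c.sum fun y b => star a * zetaKernel ζ φ x y * b).re
  map_add' φ ψ := by
    simp only [zetaKernel, Finsupp.sum, Matrix.of_apply, Pi.add_apply, mul_add, add_mul,
      Finset.sum_add_distrib, Complex.add_re]
  map_smul' r φ := by
    simp only [zetaKernel, Finsupp.sum, Matrix.of_apply, Pi.smul_apply, mul_smul_comm,
      smul_mul_assoc, ← Finset.smul_sum, Complex.smul_re, RingHom.id_apply]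
  cont := by
    simp only [zetaKernel, Finsupp.sum, Matrix.of_apply]
    fun_prop

theorem zetaForm_apply (c : G →₀ ℂ) (φ : G → ℂ) : zetaForm ζ c φ =
    (c.sum fun x a => c.sum fun y b => star a * zetaKernel ζ φ x y * b).re := rfl

theorem zetaForm_nonneg {φ : G → ℂ} (hφ : φ ∈ zetaStates ζ) (c : G →₀ ℂ) : 0 ≤ zetaForm ζ c φ :=
  (Complex.nonneg_iff.1 (hφ.2.2 c)).1

theorem IsMultiplier.zetaKernel_mul_mul (hζ : IsMultiplier ζ) (φ : G → ℂ) (g x y : G) :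
    zetaKernel ζ φ (g * x) (g * y) = ζ g x * ((ζ g y)⁻¹ : Circle) * zetaKernel ζ φ x y := by
  have hcocycle : ζ g x * ζ (g * x) (x⁻¹ * y) = ζ g y * ζ x (x⁻¹ * y) := by
    simpa using hζ.2.2 g x (x⁻¹ * y)
  have hinv : (ζ (g * x) (x⁻¹ * y))⁻¹ = ζ g x * (ζ g y)⁻¹ * (ζ x (x⁻¹ * y))⁻¹ := by
    rw [mul_assoc, ← mul_inv, ← hcocycle, mul_inv, mul_inv_cancel_left]
  simp only [zetaKernel, Matrix.of_apply, mul_inv_rev, mul_assoc, inv_mul_cancel_left, hinv,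
    Circle.coe_mul]

end ZetaKernels

section Representations

variable {G : Type*} [Group G] {ζ : G → G → Circle} {H : Type*} [NormedAddCommGroup H]
  [InnerProductSpace ℂ H]

/-- The coefficient `x ↦ ⟪v, π x v⟫` of `π` at the vector `v`, a state when `v` is a unit vector. -/
noncomputable def vectorState (π : G → (H →L[ℂ] H)) (v : H) : G → ℂ := fun x => ⟪v, π x v⟫_ℂ

variable {π : G → (H →L[ℂ] H)}

theorem mul_inv_smul_eq_one (hone : π 1 = 1)
    (hmul : ∀ x y, π x * π y = (ζ x y : ℂ) • π (x * y)) (x : G) :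
    π x * ((((ζ x x⁻¹)⁻¹ : Circle) : ℂ) • π x⁻¹) = 1 := by
  rw [mul_smul_comm, hmul, smul_smul, ← Circle.coe_mul, inv_mul_cancel, Circle.coe_one, one_smul,
    mul_inv_cancel, hone]

variable [CompleteSpace H]

namespace IsZetaRep

theorem apply_apply (hπ : IsZetaRep ζ π) (x y : G) (v : H) :
    π x (π y v) = (ζ x y : ℂ) • π (x * y) v := by
  simpa using DFunLike.congr_fun (hπ.2.2 x y) v

theorem star_eq (hπ : IsZetaRep ζ π) (x : G) :
    star (π x) = (((ζ x x⁻¹)⁻¹ : Circle) : ℂ) • π x⁻¹ :=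
  left_inv_eq_right_inv (Unitary.star_mul_self_of_mem (hπ.1 x))
    (mul_inv_smul_eq_one hπ.2.1 hπ.2.2 x)

theorem inner_map_map (hπ : IsZetaRep ζ π) (x : G) (u w : H) : ⟪π x u, π x w⟫_ℂ = ⟪u, w⟫_ℂ :=
  ContinuousLinearMap.inner_map_map_of_mem_unitary (hπ.1 x) u w

theorem gram_eq_zetaKernel (hπ : IsZetaRep ζ π) (v : H) :
    Matrix.gram ℂ (fun x => π x v) = zetaKernel ζ (vectorState π v) := by
  ext x y
  have hy : π y v = (((ζ x (x⁻¹ * y))⁻¹ : Circle) : ℂ) • π x (π (x⁻¹ * y) v) := by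
    rw [hπ.apply_apply, smul_smul, ← Circle.coe_mul, inv_mul_cancel, Circle.coe_one, one_smul,
      mul_inv_cancel_left]
  rw [Matrix.gram_apply, hy, inner_smul_right, hπ.inner_map_map]
  rfl

theorem norm_sq_linearCombination (hπ : IsZetaRep ζ π) (v : H) (c : G →₀ ℂ) :
    ‖Finsupp.linearCombination ℂ (fun x => π x v) c‖ ^ 2 = zetaForm ζ c (vectorState π v) := by
  rw [zetaForm_apply, ← hπ.gram_eq_zetaKernel, sum_gram_eq_norm_sq]
  exact_mod_cast rfl

theorem vectorState_one (hπ : IsZetaRep ζ π) (v : H) : vectorState π v 1 = (‖v‖ : ℂ) ^ 2 := by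
  simp [vectorState, hπ.2.1, inner_self_eq_norm_sq_to_K]

theorem vectorState_mem (hπ : IsZetaRep ζ π) {v : H} (hv : ‖v‖ = 1) :
    vectorState π v ∈ zetaStates ζ := by
  refine ⟨by simp [hπ.vectorState_one, hv], ?_⟩
  rw [← hπ.gram_eq_zetaKernel]
  exact posSemidef_gram _

theorem dense_span (hπ : IsZetaRep ζ π) (hirr : IsIrreducibleRep π) {v : H} (hv : v ≠ 0) :
    Dense (Submodule.span ℂ (Set.range fun x => π x v) : Set H) := by
  set K := Submodule.span ℂ (Set.range fun x => π x v)
  have hinv (x : G) : K ≤ K.comap (π x).toLinearMap := by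
    refine Submodule.span_le.2 (Set.range_subset_iff.2 fun y => ?_)
    change π x (π y v) ∈ K
    rw [hπ.apply_apply]
    exact K.smul_mem _ (Submodule.subset_span ⟨_, rfl⟩)
  have hvK : v ∈ K := Submodule.subset_span ⟨1, by simp [hπ.2.1]⟩
  rcases hirr K.topologicalClosure K.isClosed_topologicalClosure
    (fun x u hu => map_mem_closure (π x).continuous hu (hinv x)) with hbot | htop
  · exact absurd ((Submodule.mem_bot ℂ).1 (hbot ▸ K.le_topologicalClosure hvK)) hv
  · exact Submodule.dense_iff_topologicalClosure_eq_top.2 htop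

theorem map_mem_orthogonal (hπ : IsZetaRep ζ π) {K : Submodule ℂ H}
    (hK : ∀ x, ∀ v ∈ K, π x v ∈ K) (x : G) {w : H} (hw : w ∈ Kᗮ) : π x w ∈ Kᗮ := by
  intro u hu
  rw [← ContinuousLinearMap.adjoint_inner_left, ← ContinuousLinearMap.star_eq_adjoint,
    hπ.star_eq, smul_apply]
  exact hw _ (K.smul_mem _ (hK _ _ hu))

end IsZetaRep

theorem exists_isZetaRep_of_covariant {e : G → H} (hζ : IsMultiplier ζ)
    (hdense : Dense (Submodule.span ℂ (Set.range e) : Set H))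
    (hcov : ∀ g x y, ⟪e (g * x), e (g * y)⟫_ℂ = ζ g x * ((ζ g y)⁻¹ : Circle) * ⟪e x, e y⟫_ℂ) :
    ∃ π : G → (H →L[ℂ] H), IsZetaRep ζ π ∧ ∀ g x, π g (e x) = (ζ g x : ℂ) • e (g * x) := by
  have hS (g : G) : ∃ S : H →L[ℂ] H, (∀ u w, ⟪S u, S w⟫_ℂ = ⟪u, w⟫_ℂ) ∧
      ∀ x, S (e x) = (ζ g x : ℂ) • e (g * x) := by
    refine exists_isometry_of_gram_eq hdense ?_
    ext x y
    simp only [Matrix.gram_apply, inner_smul_left, inner_smul_right, hcov,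
      ← Circle.coe_inv_eq_conj, Circle.coe_inv]
    field_simp
  choose π hinner hπ using hS
  have hone : π 1 = 1 := clm_ext_of_dense_span hdense fun x => by simp [hπ, hζ.1]
  have hmul (x y : G) : π x * π y = (ζ x y : ℂ) • π (x * y) :=
    clm_ext_of_dense_span hdense fun z => by
      simp only [mul_apply_eq_comp, smul_apply, hπ, map_smul, smul_smul, ← Circle.coe_mul,
        hζ.2.2, mul_comm (ζ y z), mul_assoc]
  refine ⟨π, ⟨fun x => ?_, hone, hmul⟩, hπ⟩
  have hleft : star (π x) * π x = 1 :=
    (ContinuousLinearMap.inner_map_map_iff_adjoint_comp_self _).1 (hinner x)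
  have hright := mul_inv_smul_eq_one hone hmul x
  exact ⟨hleft, left_inv_eq_right_inv hleft hright ▸ hright⟩

theorem exists_gns.{u} {G : Type u} [Group G] {ζ : G → G → Circle} (hζ : IsMultiplier ζ)
    {φ : G → ℂ} (hφ : φ ∈ zetaStates ζ) :
    ∃ (H : Type u) (_ : NormedAddCommGroup H) (_ : InnerProductSpace ℂ H) (_ : CompleteSpace H)
      (π : G → (H →L[ℂ] H)) (v : H), IsZetaRep ζ π ∧ ‖v‖ = 1 ∧ vectorState π v = φ ∧
        Dense (Submodule.span ℂ (Set.range fun x => π x v) : Set H) := by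
  obtain ⟨H, _, _, _, e, he, hdense⟩ := exists_gram_eq_of_posSemidef hφ.2
  have hinner (x y : G) : ⟪e x, e y⟫_ℂ = zetaKernel ζ φ x y := by rw [← he, Matrix.gram_apply]
  obtain ⟨π, hπ, hπe⟩ := exists_isZetaRep_of_covariant hζ hdense fun g x y => by
    rw [hinner, hinner, hζ.zetaKernel_mul_mul]
  have hcyclic (x : G) : π x (e 1) = e x := by simp [hπe, hζ.2.1]
  have hstate : vectorState π (e 1) = φ := by
    ext x
    simp [vectorState, hcyclic, hinner, zetaKernel, hζ.1]
  refine ⟨H, inferInstance, inferInstance, inferInstance, π, e 1, hπ, ?_, hstate, ?_⟩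
  · have hnorm := hπ.vectorState_one (e 1)
    rw [hstate, hφ.1] at hnorm
    exact (pow_eq_one_iff_of_nonneg (norm_nonneg _) two_ne_zero).1 (by exact_mod_cast hnorm.symm)
  · simpa only [hcyclic] using hdense

end Representations

section Schur

variable {X H : Type*} [NormedAddCommGroup H] [InnerProductSpace ℂ H] [CompleteSpace H]
  {π : X → (H →L[ℂ] H)}

namespace IsIrreducibleRep

theorem eq_zero_or_eq_zero_of_mul_eq_zero (hirr : IsIrreducibleRep π) {A B : H →L[ℂ] H}
    (hcomm : ∀ x, Commute A (π x)) (hAB : A * B = 0) : A = 0 ∨ B = 0 := by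
  have hinv (x : X) (v : H) (hv : v ∈ A.ker) : π x v ∈ A.ker := by
    have hAπ : A (π x v) = π x (A v) := DFunLike.congr_fun (hcomm x).eq v
    rw [LinearMap.mem_ker] at hv ⊢
    exact hAπ.trans ((congrArg (π x) hv).trans (map_zero _))
  have hrange (v : H) : B v ∈ A.ker := DFunLike.congr_fun hAB v
  rcases hirr A.ker A.isClosed_ker hinv with hbot | htop
  · refine .inr (ContinuousLinearMap.ext fun v => ?_)
    simpa [hbot] using hrange v
  · refine .inl (ContinuousLinearMap.ext fun v => ?_)
    exact LinearMap.mem_ker.1 (htop ▸ Submodule.mem_top : v ∈ A.ker)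

theorem spectrum_le_or_le (hirr : IsIrreducibleRep π) {T : H →L[ℂ] H} (hT : IsSelfAdjoint T)
    (hcomm : ∀ x, Commute T (π x)) (r : ℝ) :
    (∀ t ∈ spectrum ℝ T, t ≤ r) ∨ ∀ t ∈ spectrum ℝ T, r ≤ t := by
  set A := T - algebraMap ℝ (H →L[ℂ] H) r
  have hA : IsSelfAdjoint A := hT.sub (.algebraMap _ (.all r))
  have hAcomm (x : X) : Commute A (π x) := (hcomm x).sub_left (Algebra.commutes r (π x))
  have hposcomm (x : X) : Commute A⁺ (π x) := by
    rw [CFC.posPart_def]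
    exact hA.commute_cfcₙ (hAcomm x) _
  rcases hirr.eq_zero_or_eq_zero_of_mul_eq_zero hposcomm (CFC.posPart_mul_negPart A) with h | h
  · left
    rw [CFC.posPart_eq_zero_iff A hA, sub_nonpos, le_algebraMap_iff_spectrum_le] at h
    exact h
  · right
    rw [CFC.negPart_eq_zero_iff A hA, sub_nonneg, algebraMap_le_iff_le_spectrum] at h
    exact h

/-- Schur's lemma for self-adjoint operators. -/
theorem exists_eq_algebraMap (hirr : IsIrreducibleRep π) [Nontrivial H] {T : H →L[ℂ] H}
    (hT : IsSelfAdjoint T) (hcomm : ∀ x, Commute T (π x)) :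
    ∃ r : ℝ, T = algebraMap ℝ (H →L[ℂ] H) r := by
  obtain ⟨r, hr⟩ := ContinuousFunctionalCalculus.spectrum_nonempty (R := ℝ) T hT
  refine ⟨r, CFC.eq_algebraMap_of_spectrum_subset_singleton T r fun s hs => ?_⟩
  have hmid := hirr.spectrum_le_or_le hT hcomm ((r + s) / 2)
  rw [Set.mem_singleton_iff]
  rcases hmid with h | h <;> linarith [h r hr, h s hs]

end IsIrreducibleRep

end Schur

section PureStates

variable {G H H' : Type*} [Group G] {ζ : G → G → Circle}
  [NormedAddCommGroup H] [InnerProductSpace ℂ H] [CompleteSpace H]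
  [NormedAddCommGroup H'] [InnerProductSpace ℂ H'] [CompleteSpace H']
  {π : G → (H →L[ℂ] H)} {π' : G → (H' →L[ℂ] H')} {v : H} {v' : H'}

theorem adjoint_comp_eq_comp_adjoint {U : H →L[ℂ] H} {V : H' →L[ℂ] H'} {S : H →L[ℂ] H'}
    (hU : U ∈ unitary (H →L[ℂ] H)) (hV : V ∈ unitary (H' →L[ℂ] H')) (h : S ∘L U = V ∘L S) :
    S.adjoint ∘L V = U ∘L S.adjoint := by
  have hU' : U ∘L U.adjoint = 1 := Unitary.mul_star_self_of_mem hU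
  have hV' : V.adjoint ∘L V = 1 := Unitary.star_mul_self_of_mem hV
  have hadj : U.adjoint ∘L S.adjoint = S.adjoint ∘L V.adjoint := by
    rw [← ContinuousLinearMap.adjoint_comp, h, ContinuousLinearMap.adjoint_comp]
  calc S.adjoint ∘L V = (U ∘L U.adjoint) ∘L S.adjoint ∘L V := by rw [hU']; rfl
    _ = U ∘L (U.adjoint ∘L S.adjoint) ∘L V := rfl
    _ = U ∘L S.adjoint ∘L V.adjoint ∘L V := by rw [hadj]; rfl
    _ = U ∘L S.adjoint := by rw [hV']; rfl

namespace IsZetaRep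

theorem exists_intertwiner (hπ : IsZetaRep ζ π) (hπ' : IsZetaRep ζ π')
    (hv : Dense (Submodule.span ℂ (Set.range fun x => π x v) : Set H)) {C : ℝ}
    (hC : ∀ c, zetaForm ζ c (vectorState π' v') ≤ C * zetaForm ζ c (vectorState π v)) :
    ∃ S : H →L[ℂ] H', S v = v' ∧ ∀ x, S ∘L π x = π' x ∘L S := by
  obtain ⟨S, hS⟩ : ∃ S : H →L[ℂ] H', ∀ x, S (π x v) = π' x v' := by
    refine exists_clm_of_norm_le hv √C fun c => ?_
    have hc := hC c
    rw [← hπ.norm_sq_linearCombination, ← hπ'.norm_sq_linearCombination] at hc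
    simpa only [Real.sqrt_mul' C (sq_nonneg _), Real.sqrt_sq (norm_nonneg _)] using
      Real.le_sqrt_of_sq_le hc
  refine ⟨S, by simpa only [hπ.2.1, hπ'.2.1, one_apply_eq_self] using hS 1, fun x =>
    clm_ext_of_dense_span hv fun y => ?_⟩
  simp only [ContinuousLinearMap.comp_apply, hπ.apply_apply, map_smul, hS, hπ'.apply_apply]

theorem exists_vectorState_eq_smul (hπ : IsZetaRep ζ π) (hπ' : IsZetaRep ζ π')
    (hirr : IsIrreducibleRep π) [Nontrivial H] {S : H →L[ℂ] H'}
    (hS : ∀ x, S ∘L π x = π' x ∘L S) :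
    ∃ r : ℝ, ∀ v, vectorState π' (S v) = (r : ℂ) • vectorState π v := by
  have hadj (x : G) := adjoint_comp_eq_comp_adjoint (hπ.1 x) (hπ'.1 x) (hS x)
  obtain ⟨r, hr⟩ := hirr.exists_eq_algebraMap (T := S.adjoint ∘L S)
    (ContinuousLinearMap.isPositive_adjoint_comp_self S).isSelfAdjoint fun x =>
      calc (S.adjoint ∘L S) ∘L π x = (S.adjoint ∘L π' x) ∘L S := by
            rw [ContinuousLinearMap.comp_assoc, hS, ContinuousLinearMap.comp_assoc]
        _ = π x ∘L S.adjoint ∘L S := by rw [hadj, ContinuousLinearMap.comp_assoc]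
  refine ⟨r, fun v => funext fun x => ?_⟩
  have hSS : S.adjoint (S (π x v)) = (r : ℂ) • π x v := DFunLike.congr_fun hr (π x v)
  have hSπ : π' x (S v) = S (π x v) := (DFunLike.congr_fun (hS x) v).symm
  rw [vectorState, hSπ, ← ContinuousLinearMap.adjoint_inner_right, hSS, inner_smul_right]
  rfl

end IsZetaRep

theorem IsZetaRep.eq_vectorState_of_zetaForm_le.{u} {G : Type u} [Group G] {ζ : G → G → Circle}
    {π : G → (H →L[ℂ] H)} (hπ : IsZetaRep ζ π) (hζ : IsMultiplier ζ) (hirr : IsIrreducibleRep π)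
    (hv : ‖v‖ = 1) {ψ : G → ℂ} (hψ : ψ ∈ zetaStates ζ) {C : ℝ}
    (hC : ∀ c, zetaForm ζ c ψ ≤ C * zetaForm ζ c (vectorState π v)) : ψ = vectorState π v := by
  have hv0 : v ≠ 0 := by rintro rfl; simp at hv
  have : Nontrivial H := ⟨v, 0, hv0⟩
  obtain ⟨H₁, _, _, _, π₁, v₁, hπ₁, -, rfl, -⟩ := exists_gns hζ hψ
  obtain ⟨S, rfl, hS⟩ := hπ.exists_intertwiner hπ₁ (hπ.dense_span hirr hv0) hC
  obtain ⟨r, hr⟩ := hπ.exists_vectorState_eq_smul hπ₁ hirr hS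
  have hr1 : (r : ℂ) = 1 := by
    simpa [hψ.1, hπ.vectorState_one, hv] using (congrFun (hr v) 1).symm
  rw [hr, hr1, one_smul]

theorem IsZetaRep.vectorState_mem_extremePoints (hπ : IsZetaRep ζ π) (hζ : IsMultiplier ζ)
    (hirr : IsIrreducibleRep π) (hv : ‖v‖ = 1) :
    vectorState π v ∈ (zetaStates ζ).extremePoints ℝ := by
  refine mem_extremePoints_iff_left.2 ⟨hπ.vectorState_mem hv, ?_⟩
  rintro ψ₁ h₁ ψ₂ h₂ ⟨a, b, ha, hb, -, hab⟩
  refine hπ.eq_vectorState_of_zetaForm_le hζ hirr hv h₁ (C := a⁻¹) fun c => ?_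
  rw [← hab, map_add, map_smul, map_smul, smul_eq_mul, smul_eq_mul, mul_add,
    inv_mul_cancel_left₀ ha.ne', le_add_iff_nonneg_right]
  have := zetaForm_nonneg h₂ c
  positivity

theorem smul_eq_smul_of_mem_extremePoints {E : Type*} [AddCommGroup E] [Module ℝ E] {A : Set E}
    {x x₁ x₂ : E} (hx : x ∈ A.extremePoints ℝ) (h₁ : x₁ ∈ A) (h₂ : x₂ ∈ A) {a b : ℝ}
    (ha : 0 ≤ a) (hb : 0 ≤ b) (hab : a + b = 1) (h : a • x₁ + b • x₂ = x) : a • x₁ = a • x := by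
  rcases ha.eq_or_lt with rfl | ha
  · rw [zero_smul, zero_smul]
  rcases hb.eq_or_lt with rfl | hb
  · rw [← h, zero_smul, add_zero, ← mul_smul, ← add_zero a, hab, one_mul]
  · rw [(mem_extremePoints_iff_left.1 hx).2 x₁ h₁ x₂ h₂ ⟨a, b, ha, hb, hab, h⟩]

namespace IsZetaRep

theorem exists_vectorState_eq_norm_sq_smul (hπ : IsZetaRep ζ π) {φ₀ : G → ℂ}
    (hφ₀ : φ₀ ∈ zetaStates ζ) (u : H) :
    ∃ φ ∈ zetaStates ζ, vectorState π u = ‖u‖ ^ 2 • φ := by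
  rcases eq_or_ne u 0 with rfl | hu
  · refine ⟨φ₀, hφ₀, funext fun x => ?_⟩
    simp [vectorState]
  · have hu' : (‖u‖ : ℂ) ≠ 0 := by simpa using hu
    refine ⟨vectorState π ((‖u‖⁻¹ : ℂ) • u), hπ.vectorState_mem ?_, funext fun x => ?_⟩
    · simp [norm_smul, hu]
    · simp only [vectorState, map_smul, inner_smul_left, inner_smul_right, Pi.smul_apply,
        Complex.real_smul, map_inv₀, Complex.conj_ofReal, Complex.ofReal_pow]
      field_simp

theorem vectorState_add (hπ : IsZetaRep ζ π) {K : Submodule ℂ H} (hK : ∀ x, ∀ v ∈ K, π x v ∈ K)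
    {w w' : H} (hw : w ∈ K) (hw' : w' ∈ Kᗮ) :
    vectorState π (w + w') = vectorState π w + vectorState π w' := by
  ext x
  have h₁ : ⟪w, π x w'⟫_ℂ = 0 := hπ.map_mem_orthogonal hK x hw' w hw
  have h₂ : ⟪w', π x w⟫_ℂ = 0 := Submodule.inner_left_of_mem_orthogonal (hK x w hw) hw'
  simp only [vectorState, map_add, inner_add_left, inner_add_right, h₁, h₂, Pi.add_apply, add_zero,
    zero_add]

theorem eq_norm_sq_smul_of_mem_extremePoints (hπ : IsZetaRep ζ π) (hv : ‖v‖ = 1)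
    (hdense : Dense (Submodule.span ℂ (Set.range fun x => π x v) : Set H))
    (hext : vectorState π v ∈ (zetaStates ζ).extremePoints ℝ) {K : Submodule ℂ H}
    (hK : ∀ x, ∀ v ∈ K, π x v ∈ K) {w w' : H} (hw : w ∈ K) (hw' : w' ∈ Kᗮ) (h : w + w' = v) :
    w = (‖w‖ ^ 2 : ℂ) • v := by
  obtain ⟨φ, hφ, hwφ⟩ := hπ.exists_vectorState_eq_norm_sq_smul hext.1 w
  obtain ⟨φ', hφ', hwφ'⟩ := hπ.exists_vectorState_eq_norm_sq_smul hext.1 w'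
  have hnorm : ‖w‖ ^ 2 + ‖w'‖ ^ 2 = 1 := by
    have := norm_add_sq_eq_norm_sq_add_norm_sq_of_inner_eq_zero w w' (hw' w hw)
    rw [h, hv] at this
    linarith
  have hstate : vectorState π w = ‖w‖ ^ 2 • vectorState π v := by
    rw [hwφ]
    refine smul_eq_smul_of_mem_extremePoints hext hφ hφ' (sq_nonneg _) (sq_nonneg _) hnorm ?_
    rw [← hwφ, ← hwφ', ← hπ.vectorState_add hK hw hw', h]
  refine eq_of_inner_left_of_dense_span hdense fun x => ?_
  have hcross : ⟪w, π x w'⟫_ℂ = 0 := hπ.map_mem_orthogonal hK x hw' w hw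
  calc ⟪w, π x v⟫_ℂ = vectorState π w x := by
        rw [← h, map_add, inner_add_right, hcross, add_zero, vectorState]
    _ = ⟪(‖w‖ ^ 2 : ℂ) • v, π x v⟫_ℂ := by
        rw [hstate, inner_smul_left]
        simp [vectorState]

theorem isIrreducibleRep (hπ : IsZetaRep ζ π) (hv : ‖v‖ = 1)
    (hdense : Dense (Submodule.span ℂ (Set.range fun x => π x v) : Set H))
    (hext : vectorState π v ∈ (zetaStates ζ).extremePoints ℝ) : IsIrreducibleRep π := by
  intro K hclosed hK
  have : CompleteSpace K := hclosed.completeSpace_coe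
  obtain ⟨w, hw, w', hw', hvw⟩ := K.exists_add_mem_mem_orthogonal v
  have hwv := hπ.eq_norm_sq_smul_of_mem_extremePoints hv hdense hext hK hw hw' hvw.symm
  rcases eq_or_ne w 0 with rfl | hw0
  · left
    rw [zero_add] at hvw
    refine (Submodule.eq_bot_iff _).2 fun u hu =>
      eq_of_inner_left_of_dense_span hdense fun x => ?_
    rw [inner_zero_left]
    exact hπ.map_mem_orthogonal hK x (hvw ▸ hw') u hu
  · right
    have hw0' : (‖w‖ : ℂ) ^ 2 ≠ 0 := by simpa using hw0
    have hvK : v ∈ K := (K.smul_mem_iff hw0').1 (hwv ▸ hw)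
    refine hclosed.submodule_topologicalClosure_eq.symm.trans
      (Submodule.dense_iff_topologicalClosure_eq_top.1 (hdense.mono ?_))
    exact Submodule.span_le.2 (Set.range_subset_iff.2 fun x => hK x v hvK)

end IsZetaRep

end PureStates

section Restriction

variable {G : Type*} [Group G] {ζ : G → G → Circle}

/-- The restriction of a multiplier to a subgroup. A `restrictMultiplier ζ N`-representation of `N`
is the same thing as an `IsZetaRepOn ζ N`-representation. -/
abbrev restrictMultiplier (ζ : G → G → Circle) (N : Subgroup G) : N → N → Circle :=
  fun x y => ζ x y

theorem IsMultiplier.restrict (hζ : IsMultiplier ζ) (N : Subgroup G) :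
    IsMultiplier (restrictMultiplier ζ N) :=
  ⟨fun x => hζ.1 x, fun x => hζ.2.1 x, fun x y z => hζ.2.2 x y z⟩

theorem comp_val_mem_zetaStates {φ : G → ℂ} (hφ : φ ∈ zetaStates ζ) (N : Subgroup G) :
    (fun x : N => φ x) ∈ zetaStates (restrictMultiplier ζ N) :=
  ⟨hφ.1, hφ.2.submatrix ((↑) : N → G)⟩

theorem norm_apply_le_one_of_mem_zetaStates (hζ : IsMultiplier ζ) {φ : G → ℂ}
    (hφ : φ ∈ zetaStates ζ) (x : G) : ‖φ x‖ ≤ 1 := by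
  obtain ⟨H, _, _, _, π, v, hπ, hv, rfl, -⟩ := exists_gns hζ hφ
  simpa [vectorState, hv, ContinuousLinearMap.norm_map_of_mem_unitary (hπ.1 x)] using
    norm_inner_le_norm (𝕜 := ℂ) v (π x v)

theorem isClosed_zetaStates : IsClosed (zetaStates ζ) := by
  have hkernel : Continuous (zetaKernel ζ) := by
    unfold zetaKernel
    fun_prop
  have hform (c : G →₀ ℂ) : Continuous fun φ : G → ℂ =>
      c.sum fun x a => c.sum fun y b => star a * zetaKernel ζ φ x y * b := by
    simp only [zetaKernel, Finsupp.sum, Matrix.of_apply]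
    fun_prop
  simp only [zetaStates, Matrix.PosSemidef, Set.ofPred_and, Set.ofPred_forall]
  exact (isClosed_eq (continuous_apply 1) continuous_const).inter
    ((isClosed_eq hkernel.matrix_conjTranspose hkernel).inter
      (isClosed_iInter fun c => isClosed_le continuous_const (hform c)))

theorem isCompact_zetaStates (hζ : IsMultiplier ζ) : IsCompact (zetaStates ζ) :=
  (isCompact_univ_pi fun _ => isCompact_closedBall (0 : ℂ) 1).of_isClosed_subset
    isClosed_zetaStates fun _ hφ x _ =>
      mem_closedBall_zero_iff.2 (norm_apply_le_one_of_mem_zetaStates hζ hφ x)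

theorem zetaKernel_extend_coe {N : Subgroup G} (ψ : N → ℂ) (n m : N) :
    zetaKernel ζ (Function.extend ((↑) : N → G) ψ 0) n m =
      zetaKernel (restrictMultiplier ζ N) ψ n m :=
  congrArg (_ * ·) (Subtype.val_injective.extend_apply ψ 0 (n⁻¹ * m))

open scoped Classical in
theorem exists_gram_eq_zetaKernel_extend (hζ : IsMultiplier ζ) {N : Subgroup G} {ψ : N → ℂ}
    {H : Type*} [NormedAddCommGroup H] [InnerProductSpace ℂ H] {e : N → H}
    (he : Matrix.gram ℂ e = zetaKernel (restrictMultiplier ζ N) ψ) :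
    ∃ E : G → lp (fun _ : G ⧸ N => H) 2,
      Matrix.gram ℂ E = zetaKernel ζ (Function.extend ((↑) : N → G) ψ 0) := by
  let r (x : G) : G := (x : G ⧸ N).out
  have hr (x : G) : (r x)⁻¹ * x ∈ N := QuotientGroup.eq.1 (QuotientGroup.out_eq' (x : G ⧸ N))
  let E (x : G) : lp (fun _ : G ⧸ N => H) 2 := lp.single 2 (x : G ⧸ N)
    ((((ζ (r x) ((r x)⁻¹ * x))⁻¹ : Circle) : ℂ) • e ⟨(r x)⁻¹ * x, hr x⟩)
  refine ⟨E, ?_⟩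
  ext x y
  rw [Matrix.gram_apply, lp.inner_single_left]
  by_cases hxy : (x : G ⧸ N) = y
  · have hrxy : r y = r x := congrArg Quotient.out hxy.symm
    rw [hxy, lp.single_apply_self, inner_smul_left, inner_smul_right, ← Matrix.gram_apply, he,
      ← zetaKernel_extend_coe]
    simp only [hrxy]
    have hcov := hζ.zetaKernel_mul_mul (Function.extend ((↑) : N → G) ψ 0) (r x)
      ((r x)⁻¹ * x) ((r x)⁻¹ * y)
    rw [mul_inv_cancel_left, mul_inv_cancel_left] at hcov
    rw [hcov, ← Circle.coe_inv_eq_conj, inv_inv, mul_assoc]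
  · rw [lp.single_apply_ne _ _ _ hxy, inner_zero_right, zetaKernel, Matrix.of_apply,
      Function.extend_apply', Pi.zero_apply, mul_zero]
    rintro ⟨⟨n, hn⟩, rfl : n = x⁻¹ * y⟩
    exact hxy (QuotientGroup.eq.2 hn)

theorem extend_mem_zetaStates (hζ : IsMultiplier ζ) {N : Subgroup G} {ψ : N → ℂ}
    (hψ : ψ ∈ zetaStates (restrictMultiplier ζ N)) :
    Function.extend ((↑) : N → G) ψ 0 ∈ zetaStates ζ := by
  obtain ⟨H, _, _, _, e, he, -⟩ := exists_gram_eq_of_posSemidef hψ.2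
  obtain ⟨E, hE⟩ := exists_gram_eq_zetaKernel_extend hζ he
  exact ⟨(Subtype.val_injective.extend_apply ψ 0 1).trans hψ.1, hE ▸ posSemidef_gram E⟩

/-- The states of the whole group extending the function `ψ` on the subgroup `N`. -/
def zetaStateExtensions (ζ : G → G → Circle) {N : Subgroup G} (ψ : N → ℂ) : Set (G → ℂ) :=
  {φ ∈ zetaStates ζ | ∀ x : N, φ x = ψ x}

theorem isCompact_zetaStateExtensions (hζ : IsMultiplier ζ) {N : Subgroup G} (ψ : N → ℂ) :
    IsCompact (zetaStateExtensions ζ ψ) := by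
  refine (isCompact_zetaStates hζ).inter_right (t := {φ | ∀ x : N, φ x = ψ x}) ?_
  rw [Set.ofPred_forall]
  exact isClosed_iInter fun x => isClosed_eq (by fun_prop) continuous_const

theorem isExtreme_zetaStateExtensions {N : Subgroup G} {ψ : N → ℂ}
    (hψ : ψ ∈ (zetaStates (restrictMultiplier ζ N)).extremePoints ℝ) :
    IsExtreme ℝ (zetaStates ζ) (zetaStateExtensions ζ ψ) := by
  refine ⟨fun φ hφ => hφ.1, fun φ₁ hφ₁ φ₂ hφ₂ φ hφ hmem => ⟨hφ₁, congrFun ?_⟩⟩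
  obtain ⟨a, b, ha, hb, hab, rfl⟩ := hmem
  exact hψ.2 (comp_val_mem_zetaStates hφ₁ N) (comp_val_mem_zetaStates hφ₂ N)
    ⟨a, b, ha, hb, hab, funext hφ.2⟩

end Restriction

section MinimumPrinciple

open scoped ENNReal

variable {E : Type*} [AddCommGroup E] [Module ℝ E] {F : Set E} {f : E → ℝ≥0∞}

theorem isExtreme_setOf_isMinOn
    (hf : ∀ u ∈ F, ∀ w ∈ F, ∀ a b : ℝ, 0 < a → 0 < b → a + b = 1 →
      ENNReal.ofReal a * f u + ENNReal.ofReal b * f w ≤ f (a • u + b • w)) :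
    IsExtreme ℝ F {x ∈ F | IsMinOn f F x} := by
  refine ⟨Set.sep_subset _ _, ?_⟩
  rintro u hu w hw z ⟨-, hz⟩ ⟨a, b, ha, hb, hab, rfl⟩
  have hzw := hz hw
  set z := a • u + b • w
  refine ⟨hu, isMinOn_iff.2 fun y hy => le_trans (not_lt.1 fun hlt => ?_) (hz hy)⟩
  refine (hf u hu w hw a b ha hb hab).not_gt ?_
  calc f z = ENNReal.ofReal a * f z + ENNReal.ofReal b * f z := by
        rw [← add_mul, ← ENNReal.ofReal_add ha.le hb.le, hab, ENNReal.ofReal_one, one_mul]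
    _ < ENNReal.ofReal a * f u + ENNReal.ofReal b * f w := by
        refine ENNReal.add_lt_add_of_lt_of_le
          (ENNReal.mul_ne_top ENNReal.ofReal_ne_top hlt.ne_top)
          (ENNReal.mul_lt_mul_right (by simpa using ha) ENNReal.ofReal_ne_top hlt) ?_
        gcongr
        exact hzw

variable [TopologicalSpace E] [T2Space E] [IsTopologicalAddGroup E] [ContinuousSMul ℝ E]
  [LocallyConvexSpace ℝ E]

/-- Bauer's minimum principle. -/
theorem exists_mem_extremePoints_isMinOn (hF : IsCompact F) (hne : F.Nonempty)
    (hlsc : LowerSemicontinuousOn f F)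
    (hf : ∀ u ∈ F, ∀ w ∈ F, ∀ a b : ℝ, 0 < a → 0 < b → a + b = 1 →
      ENNReal.ofReal a * f u + ENNReal.ofReal b * f w ≤ f (a • u + b • w)) :
    ∃ x ∈ F.extremePoints ℝ, IsMinOn f F x := by
  obtain ⟨y, hy, hmin⟩ := hlsc.exists_isMinOn hne hF
  have hargmin : {x ∈ F | IsMinOn f F x} = F ∩ f ⁻¹' Set.Iic (f y) := by
    ext x
    exact and_congr_right fun _ => ⟨fun hx => hx hy,
      fun hx => isMinOn_iff.2 fun w hw => le_trans hx (hmin hw)⟩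
  have hcompact : IsCompact {x ∈ F | IsMinOn f F x} :=
    hargmin ▸ hlsc.isCompact_inter_preimage_Iic hF (f y)
  obtain ⟨x, hx⟩ := hcompact.extremePoints_nonempty ⟨y, hy, hmin⟩
  exact ⟨x, (isExtreme_setOf_isMinOn hf).extremePoints_subset_extremePoints hx, hx.1.2⟩

theorem exists_extremePoint_forall_notMem {I : Type*} [Countable I] (hF : IsCompact F) {x₀ : E}
    (hx₀ : x₀ ∈ F) {P : I → Set E}
    (hP : ∀ i, ∀ ε > (0 : ℝ), ∃ h : E →L[ℝ] ℝ, (∀ x ∈ F, 0 ≤ h x) ∧ h x₀ < ε ∧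
      ∀ x ∈ P i, 1 ≤ h x) :
    ∃ x ∈ F.extremePoints ℝ, ∀ i, x ∉ P i := by
  obtain ⟨ε, hε, hsum⟩ := ENNReal.exists_pos_sum_of_countable one_ne_zero I
  choose h hnonneg hsmall hlarge using fun i => hP i (ε i) (by exact_mod_cast hε i)
  let f (x : E) : ℝ≥0∞ := ∑' i, ENNReal.ofReal (h i x)
  have hlsc : LowerSemicontinuous f := lowerSemicontinuous_tsum fun i =>
    (ENNReal.continuous_ofReal.comp (h i).continuous).lowerSemicontinuous
  have hconcave (u) (hu : u ∈ F) (w) (hw : w ∈ F) (a b : ℝ) (ha : 0 < a) (hb : 0 < b)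
      (_ : a + b = 1) :
      ENNReal.ofReal a * f u + ENNReal.ofReal b * f w ≤ f (a • u + b • w) := by
    simp only [f, ← ENNReal.tsum_mul_left, ← ENNReal.tsum_add]
    refine ENNReal.tsum_le_tsum fun i => ?_
    rw [← ENNReal.ofReal_mul ha.le, ← ENNReal.ofReal_mul hb.le,
      ← ENNReal.ofReal_add (mul_nonneg ha.le (hnonneg i u hu)) (mul_nonneg hb.le (hnonneg i w hw)),
      map_add, map_smul, map_smul, smul_eq_mul, smul_eq_mul]
  obtain ⟨x, hx, hmin⟩ :=
    exists_mem_extremePoints_isMinOn hF ⟨x₀, hx₀⟩ (hlsc.lowerSemicontinuousOn F) hconcave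
  refine ⟨x, hx, fun i hi => ?_⟩
  have hlt : f x < 1 := calc
    f x ≤ f x₀ := hmin hx₀
    _ ≤ ∑' i, (ε i : ℝ≥0∞) := ENNReal.tsum_le_tsum fun i =>
      ENNReal.ofReal_le_of_le_toReal (hsmall i).le
    _ < 1 := hsum
  have hone : 1 ≤ f x := le_trans (by simpa using hlarge i x hi) (ENNReal.le_tsum i)
  exact hone.not_gt hlt

end MinimumPrinciple

section Characters

variable {M : Type*} [Group M] {ω : M → M → Circle} {χ : M → Circle}

/-- The one-dimensional `ω`-representations of a group. -/
def zetaCharacters (ω : M → M → Circle) : Set (M → Circle) :=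
  {χ | ∀ a b, χ a * χ b = ω a b * χ (a * b)}

/-- The quotient of two one-dimensional `ω`-representations is a character. -/
noncomputable def zetaCharacterDiv (χ χ₀ : zetaCharacters ω) : M →* Circle :=
  MonoidHom.mk' (fun a => χ.1 a / χ₀.1 a) fun a b => by
    rw [div_mul_div_comm, χ.2, χ₀.2, mul_div_mul_left_eq_div]

theorem finite_monoidHom_circle [Finite (Abelianization M)] : Finite (M →* Circle) := by
  refine Finite.of_injective (fun f : M →* Circle => Circle.toUnits.comp (Abelianization.lift f))
    fun f g hfg => ?_
  ext x
  simpa using congrArg Units.val (DFunLike.congr_fun hfg (Abelianization.of x))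

theorem finite_zetaCharacters [Finite (Abelianization M)] : Finite (zetaCharacters ω) := by
  rcases isEmpty_or_nonempty (zetaCharacters ω) with _ | ⟨⟨χ₀⟩⟩
  · infer_instance
  have := finite_monoidHom_circle (M := M)
  refine Finite.of_injective (zetaCharacterDiv · χ₀) fun χ χ' h => Subtype.ext (funext fun a => ?_)
  exact div_left_injective (DFunLike.congr_fun h a)

theorem gram_zetaCharacter (hχ : χ ∈ zetaCharacters ω) :
    Matrix.gram ℂ (fun a => (χ a : ℂ)) = zetaKernel ω fun a => χ a := by
  ext x y
  have hy : χ y * (χ x)⁻¹ = (ω x (x⁻¹ * y))⁻¹ * χ (x⁻¹ * y) := by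
    rw [eq_inv_mul_iff_mul_eq, ← mul_assoc, mul_inv_eq_iff_eq_mul, mul_comm (χ _), hχ,
      mul_inv_cancel_left]
  rw [Matrix.gram_apply, RCLike.inner_apply, ← Circle.coe_inv_eq_conj]
  exact congrArg Subtype.val hy

theorem zetaForm_zetaCharacter (hχ : χ ∈ zetaCharacters ω) (c : M →₀ ℂ) :
    zetaForm ω c (fun a => χ a) = ‖c.sum fun x a => a * χ x‖ ^ 2 := by
  rw [zetaForm_apply, ← gram_zetaCharacter hχ, sum_gram_eq_norm_sq]
  exact_mod_cast rfl

theorem zetaForm_single_one [DecidableEq M] (hω : ∀ x, ω x 1 = 1) (c : M →₀ ℂ) :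
    zetaForm ω c (Pi.single 1 1) = c.sum fun _ a => ‖a‖ ^ 2 := by
  have hkernel : zetaKernel ω (Pi.single 1 1) = 1 := by
    ext x y
    rcases eq_or_ne x y with rfl | hxy
    · simp [zetaKernel, hω]
    · simp [zetaKernel, hxy, inv_mul_eq_one]
  rw [zetaForm_apply, hkernel, Finsupp.sum, Complex.re_sum]
  refine Finset.sum_congr rfl fun x hx => ?_
  simp only [Matrix.one_apply, mul_ite, mul_one, mul_zero, ite_mul, zero_mul, Finsupp.sum_ite_eq,
    if_pos hx, Complex.star_def, Complex.conj_mul']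
  exact_mod_cast rfl

-- Averaging `conj (χ s)` over `n + 1` points `s` gives `1` on `χ`, but only `1 / (n + 1)` on the
-- trace.
theorem exists_zetaForm_single_one_lt [DecidableEq M] [Infinite M] (hω : ∀ x, ω x 1 = 1)
    (hχ : χ ∈ zetaCharacters ω) {ε : ℝ} (hε : 0 < ε) :
    ∃ c : M →₀ ℂ, zetaForm ω c (Pi.single 1 1) < ε ∧ zetaForm ω c (fun a => χ a) = 1 := by
  obtain ⟨n, hn⟩ := exists_nat_one_div_lt hε
  obtain ⟨S, hS⟩ := Infinite.exists_subset_card_eq M (n + 1)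
  let c : M →₀ ℂ := Finsupp.indicator S fun s _ => (((χ s)⁻¹ : Circle) : ℂ) / (n + 1 : ℕ)
  refine ⟨c, ?_, ?_⟩
  · rw [zetaForm_single_one hω, Finsupp.sum_indicator_index _ (by simp)]
    simp only [norm_div, Circle.norm_coe, Complex.norm_natCast, Finset.sum_const, hS,
      nsmul_eq_mul]
    have havg : ((n + 1 : ℕ) : ℝ) * (1 / (n + 1 : ℕ)) ^ 2 = 1 / (n + 1) := by
      push_cast
      field_simp
    rwa [havg]
  · have hsum : (c.sum fun x a => a * χ x) = 1 := by
      rw [Finsupp.sum_indicator_index _ (by simp)]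
      simp only [div_mul_eq_mul_div, ← Circle.coe_mul, inv_mul_cancel, Circle.coe_one,
        Finset.sum_const, hS, nsmul_eq_mul]
      field_simp
    rw [zetaForm_zetaCharacter hχ, hsum, norm_one, one_pow]

end Characters

section PureExtension

variable {G : Type*} [Group G] {ζ : G → G → Circle} {N : Subgroup G} {ψ : N → ℂ}

theorem extend_comp_val_eq_single_of_disjoint [DecidableEq G] {M : Subgroup G}
    (hMN : Disjoint M N) (hψ : ψ 1 = 1) :
    (fun y : M => Function.extend ((↑) : N → G) ψ 0 y) = Pi.single 1 1 := by
  ext y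
  by_cases hy : (y : G) ∈ N
  · obtain rfl : y = 1 := Subtype.ext (Subgroup.disjoint_def.1 hMN y.2 hy)
    rw [Pi.single_eq_same]
    exact (Subtype.val_injective.extend_apply ψ 0 1).trans hψ
  · rw [Function.extend_apply' _ _ _ fun ⟨n, hn⟩ => hy (hn ▸ n.2),
      Pi.single_eq_of_ne (by rintro rfl; exact hy N.one_mem), Pi.zero_apply]

theorem exists_functional_extend_lt (hζ : ∀ x, ζ x 1 = 1) {M : Subgroup G} [Infinite M]
    (hMN : Disjoint M N) (hψ : ψ 1 = 1) {χ : M → Circle}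
    (hχ : χ ∈ zetaCharacters (restrictMultiplier ζ M)) {ε : ℝ} (hε : 0 < ε) :
    ∃ h : (G → ℂ) →L[ℝ] ℝ, (∀ φ ∈ zetaStates ζ, 0 ≤ h φ) ∧
      h (Function.extend ((↑) : N → G) ψ 0) < ε ∧
      ∀ φ : G → ℂ, (∀ y : M, φ y = χ y) → h φ = 1 := by
  classical
  obtain ⟨c, hlt, hone⟩ := exists_zetaForm_single_one_lt (fun x : M => hζ x) hχ hε
  refine ⟨(zetaForm (restrictMultiplier ζ M) c).comp
    (ContinuousLinearMap.pi fun y : M => ContinuousLinearMap.proj (y : G)),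
    fun φ hφ => zetaForm_nonneg (comp_val_mem_zetaStates hφ M) c, ?_, fun φ hφ => ?_⟩
  · exact (congrArg _ (extend_comp_val_eq_single_of_disjoint hMN hψ)).trans_lt hlt
  · exact (congrArg _ (funext hφ)).trans hone

theorem exists_extremePoint_extension (hζ : IsMultiplier ζ)
    (hψ : ψ ∈ (zetaStates (restrictMultiplier ζ N)).extremePoints ℝ) {I : Type*} [Countable I]
    {M : I → Subgroup G} (hinf : ∀ i, Infinite (M i)) (hMN : ∀ i, Disjoint (M i) N)
    (hcount : ∀ i, Countable (zetaCharacters (restrictMultiplier ζ (M i)))) :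
    ∃ φ ∈ (zetaStates ζ).extremePoints ℝ, (∀ x : N, φ x = ψ x) ∧
      ∀ i, ∀ χ ∈ zetaCharacters (restrictMultiplier ζ (M i)), ¬ ∀ y : M i, φ y = χ y := by
  have hext : Function.extend ((↑) : N → G) ψ 0 ∈ zetaStateExtensions ζ ψ :=
    ⟨extend_mem_zetaStates hζ hψ.1, fun x => Subtype.val_injective.extend_apply ψ 0 x⟩
  obtain ⟨φ, hφ, hφM⟩ := exists_extremePoint_forall_notMem
    (isCompact_zetaStateExtensions hζ ψ) hext
    (P := fun i : Σ i, zetaCharacters (restrictMultiplier ζ (M i)) =>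
      {φ | ∀ y : M i.1, φ y = i.2.1 y})
    fun ⟨i, χ, hχ⟩ ε hε => by
      obtain ⟨h, hpos, hlt, hone⟩ := exists_functional_extend_lt hζ.2.1 (hMN i) hψ.1.1 hχ hε
      exact ⟨h, fun φ hφ => hpos φ hφ.1, hlt, fun φ hφ => (hone φ hφ).ge⟩
  exact ⟨φ, (isExtreme_zetaStateExtensions hψ).extremePoints_subset_extremePoints hφ, hφ.1.2,
    fun i χ hχ => hφM ⟨i, χ, hχ⟩⟩

end PureExtension

section ProjectiveKernel

variable {G H K : Type*} [Group G] {ζ : G → G → Circle} {N : Subgroup G}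
  [NormedAddCommGroup H] [InnerProductSpace ℂ H] [CompleteSpace H]
  [NormedAddCommGroup K] [InnerProductSpace ℂ K] [CompleteSpace K]
  {π : G → (K →L[ℂ] K)} {σ : N → (H →L[ℂ] H)} {v : H} {w : K}

namespace IsZetaRep

theorem restrict (hπ : IsZetaRep ζ π) (N : Subgroup G) :
    IsZetaRep (restrictMultiplier ζ N) fun x : N => π x :=
  ⟨fun x => hπ.1 x, hπ.2.1, fun x y => hπ.2.2 x y⟩

theorem map_mul (hπ : IsZetaRep ζ π) (x y : G) : π (x * y) = (ζ x y)⁻¹ • (π x * π y) :=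
  eq_inv_smul_iff.2 (hπ.2.2 x y).symm

theorem map_inv (hπ : IsZetaRep ζ π) (x : G) : π x⁻¹ = ζ x x⁻¹ • star (π x) :=
  inv_smul_eq_iff.1 (hπ.star_eq x).symm

theorem mul_mul_map_inv (hπ : IsZetaRep ζ π) (g x : G) :
    π g * π x * π g⁻¹ = (ζ g x * ζ (g * x) g⁻¹) • π (g * x * g⁻¹) := by
  rw [hπ.map_mul, hπ.map_mul, smul_mul_assoc, smul_smul, smul_smul]
  simp

/-- The projective kernel of a `ζ`-representation, as a subgroup. -/
def projKer (hπ : IsZetaRep ζ π) : Subgroup G where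
  carrier := ProjKer π
  one_mem' := ⟨1, by rw [hπ.2.1, Circle.coe_one, one_smul]⟩
  mul_mem' := by
    rintro x y ⟨a, ha⟩ ⟨b, hb⟩
    refine ⟨(ζ x y)⁻¹ * (a * b), ?_⟩
    rw [hπ.map_mul, ha, hb, smul_mul_smul_comm, one_mul, ← Circle.coe_mul]
    exact smul_smul _ (a * b) _
  inv_mem' := by
    rintro x ⟨a, ha⟩
    refine ⟨ζ x x⁻¹ * a⁻¹, ?_⟩
    rw [hπ.map_inv, ha, star_smul, star_one, Circle.coe_mul, Circle.coe_inv_eq_conj, mul_smul]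
    rfl

theorem normal_projKer (hπ : IsZetaRep ζ π) : hπ.projKer.Normal := by
  refine ⟨fun x ⟨a, ha⟩ g => ⟨(ζ g x * ζ (g * x) g⁻¹)⁻¹ * (a * ζ g g⁻¹), ?_⟩⟩
  have hg : π g * π g⁻¹ = ζ g g⁻¹ • 1 := by
    rw [← hπ.2.1, ← mul_inv_cancel g]
    exact hπ.2.2 g g⁻¹
  rw [← inv_smul_eq_iff.2 (hπ.mul_mul_map_inv g x), ha, mul_smul_comm, mul_one, smul_mul_assoc, hg,
    Circle.coe_mul, Circle.coe_mul, mul_smul, mul_smul]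
  rfl

theorem normalClosure_le_projKer (hπ : IsZetaRep ζ π) {x : G} (hx : x ∈ ProjKer π) :
    Subgroup.normalClosure {x} ≤ hπ.projKer :=
  have := hπ.normal_projKer
  Subgroup.normalClosure_le_normal (Set.singleton_subset_iff.2 hx)

theorem exists_zetaCharacter (hπ : IsZetaRep ζ π) {M : Subgroup G} (hM : M ≤ hπ.projKer)
    (hw : ‖w‖ = 1) :
    ∃ χ ∈ zetaCharacters (restrictMultiplier ζ M), ∀ y : M, vectorState π w y = χ y := by
  choose χ hχ using fun y : M => hM y.2
  have hstate (y : M) : vectorState π w y = χ y := by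
    simp [vectorState, hχ, inner_self_eq_norm_sq_to_K, hw]
  refine ⟨χ, fun a b => Circle.ext ?_, hstate⟩
  calc (χ a * χ b : ℂ) = ⟪w, π a (π b w)⟫_ℂ := by
        simp [hχ, inner_self_eq_norm_sq_to_K, hw, mul_comm]
    _ = ζ a b * vectorState π w ↑(a * b) := by rw [hπ.apply_apply, inner_smul_right]; rfl
    _ = ζ a b * χ (a * b) := by rw [hstate]

theorem exists_isometric_intertwiner {π' : G → (H →L[ℂ] H)} (hπ' : IsZetaRep ζ π')
    (hπ : IsZetaRep ζ π)
    (hdense : Dense (Submodule.span ℂ (Set.range fun x => π' x v) : Set H))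
    (hstate : vectorState π w = vectorState π' v) :
    ∃ S : H →L[ℂ] K, Function.Injective S ∧ ∀ x, S ∘L π' x = π x ∘L S := by
  obtain ⟨S, hinner, hS⟩ := exists_isometry_of_gram_eq (e' := fun x => π x w) hdense <| by
    rw [hπ.gram_eq_zetaKernel, hπ'.gram_eq_zetaKernel, hstate]
  have hnorm := (LinearMap.norm_map_iff_inner_map_map S).2 hinner
  refine ⟨S, (AddMonoidHomClass.isometry_of_norm S hnorm).injective,
    fun x => clm_ext_of_dense_span hdense fun y => ?_⟩
  simp only [ContinuousLinearMap.comp_apply, hπ.apply_apply, hπ'.apply_apply, map_smul, hS]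

theorem comp_conjRep [hN : N.Normal] (hπ : IsZetaRep ζ π) {S : H →L[ℂ] K}
    (hS : ∀ x : N, S ∘L σ x = π x ∘L S) (γ : G) (y : N) :
    S ∘L conjRep ζ N σ γ y = (π γ * π y * π γ⁻¹) ∘L S := by
  rw [conjRep, dif_pos (hN.conj_mem y y.2 γ), hπ.mul_mul_map_inv, ContinuousLinearMap.comp_smul,
    hS]
  rfl

end IsZetaRep

theorem GammaPFaithful.eq_one_of_mem_projKer [N.Normal] (hσ : GammaPFaithful ζ N σ)
    (hnorm : IsNormalised ζ) (hπ : IsZetaRep ζ π) {S : H →L[ℂ] K} (hinj : Function.Injective S)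
    (hS : ∀ x : N, S ∘L σ x = π x ∘L S) {y : N} (hy : (y : G) ∈ ProjKer π) : y = 1 := by
  obtain ⟨z, hz⟩ := hy
  refine hσ y ⟨z, fun γ => ContinuousLinearMap.ext fun u => hinj ?_⟩
  have hγ : π γ * π γ⁻¹ = 1 := by rw [hπ.2.2, hnorm, mul_inv_cancel, hπ.2.1]; simp
  have hconj := DFunLike.congr_fun (hπ.comp_conjRep hS γ y) u
  rw [hz, mul_smul_comm, mul_one, smul_mul_assoc, hγ] at hconj
  simpa using hconj

end ProjectiveKernel

section Minisocle

variable {Γ : Type*} [Group Γ]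

theorem normal_minisocle : (minisocle Γ).Normal := by
  unfold minisocle
  have hfoot (N : Subgroup Γ) : (⨆ _ : IsFiniteFoot N, N).Normal :=
    @Subgroup.iSup_normal _ _ _ (fun _ : IsFiniteFoot N => N) fun hN => hN.1
  exact Subgroup.iSup_normal _

theorem exists_isFiniteFoot_le {M : Subgroup Γ} [M.Normal] [Finite M] (hbot : M ≠ ⊥) :
    ∃ L ≤ M, IsFiniteFoot L := by
  have hfin : {L : Subgroup Γ | L ≤ M ∧ L.Normal ∧ L ≠ ⊥}.Finite :=
    Set.Finite.of_injOn (fun _ hL => hL.1) SetLike.coe_injective.injOn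
      (Set.toFinite (M : Set Γ)).finite_subsets
  obtain ⟨L, hL, hmin⟩ := hfin.exists_minimal ⟨M, le_rfl, inferInstance, hbot⟩
  refine ⟨L, hL.1, hL.2.1, hL.2.2, fun K hK hK' hKL => ?_,
    Finite.of_injective _ (Subgroup.inclusion_injective hL.1)⟩
  exact le_antisymm hKL (hmin ⟨hKL.trans hL.1, hK, hK'⟩ hKL)

theorem infinite_of_disjoint_minisocle {M : Subgroup Γ} [M.Normal] (hbot : M ≠ ⊥)
    (h : Disjoint M (minisocle Γ)) : Infinite M := by
  refine not_finite_iff_infinite.1 fun hfin => ?_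
  obtain ⟨L, hLM, hL⟩ := exists_isFiniteFoot_le hbot
  exact hL.2.1 (le_bot_iff.1 (h hLM (le_iSup₂_of_le L hL le_rfl)))

end Minisocle

section Extension

universe u

variable {Γ : Type u} [Group Γ] {ζ : Γ → Γ → Circle} {N : Subgroup Γ}
  {H : Type*} [NormedAddCommGroup H] [InnerProductSpace ℂ H] [CompleteSpace H]
  {K : Type*} [NormedAddCommGroup K] [InnerProductSpace ℂ K] [CompleteSpace K]

theorem exists_irreducible_extension [Countable Γ] (hζ : IsMultiplier ζ) {σ : N → (H →L[ℂ] H)}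
    (hσ : IsZetaRepOn ζ N σ) (hirr : IsIrreducibleRep σ) [Nontrivial H]
    (hab : ∀ g : Γ, Disjoint (Subgroup.normalClosure {g}) N →
      Finite (Abelianization (Subgroup.normalClosure {g}))) :
    ∃ (K : Type u) (_ : NormedAddCommGroup K) (_ : InnerProductSpace ℂ K) (_ : CompleteSpace K)
      (π : Γ → (K →L[ℂ] K)) (hπ : IsZetaRep ζ π) (S : H →L[ℂ] K),
      IsIrreducibleRep π ∧ Function.Injective S ∧ (∀ x : N, S ∘L σ x = π x ∘L S) ∧
      ∀ g : Γ, Infinite (Subgroup.normalClosure {g}) →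
        Disjoint (Subgroup.normalClosure {g}) N → ¬ Subgroup.normalClosure {g} ≤ hπ.projKer := by
  have hσ' : IsZetaRep (restrictMultiplier ζ N) σ := hσ
  obtain ⟨v, hv⟩ := exists_norm_eq H zero_le_one
  have hv0 : v ≠ 0 := norm_ne_zero_iff.1 (hv.trans_ne one_ne_zero)
  let I := {g : Γ // Infinite (Subgroup.normalClosure {g}) ∧
    Disjoint (Subgroup.normalClosure {g}) N}
  have hcount (i : I) :
      Countable (zetaCharacters (restrictMultiplier ζ (Subgroup.normalClosure {i.1}))) :=
    have := hab i.1 i.2.2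
    have := finite_zetaCharacters (ω := restrictMultiplier ζ (Subgroup.normalClosure {i.1}))
    inferInstance
  obtain ⟨φ, hext, hφN, hφI⟩ := exists_extremePoint_extension hζ
    (hσ'.vectorState_mem_extremePoints (hζ.restrict N) hirr hv) (fun i : I => i.2.1)
    (fun i => i.2.2) hcount
  obtain ⟨K, _, _, _, π, w, hπ, hw, rfl, hdense⟩ := exists_gns hζ hext.1
  obtain ⟨S, hinj, hS⟩ := hσ'.exists_isometric_intertwiner (hπ.restrict N)
    (hσ'.dense_span hirr hv0) (funext hφN)
  refine ⟨K, _, _, _, π, hπ, S, hπ.isIrreducibleRep hw hdense hext, hinj, hS,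
    fun g hinf hdisj hle => ?_⟩
  obtain ⟨χ, hχ, hstate⟩ := hπ.exists_zetaCharacter hle hw
  exact hφI ⟨g, hinf, hdisj⟩ χ hχ hstate

theorem IsZetaRep.pFaithful {π : Γ → (K →L[ℂ] K)} (hπ : IsZetaRep ζ π)
    (hle : minisocle Γ ≤ N) (hN : Disjoint hπ.projKer N)
    (hclosure : ∀ g : Γ, Infinite (Subgroup.normalClosure {g}) →
      Disjoint (Subgroup.normalClosure {g}) N → ¬ Subgroup.normalClosure {g} ≤ hπ.projKer) :
    PFaithful π := by
  intro x hx
  by_contra hx1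
  have hker := hπ.normalClosure_le_projKer hx
  have hdisj := hN.mono_left hker
  have hbot : Subgroup.normalClosure {x} ≠ ⊥ := fun h =>
    hx1 (Subgroup.mem_bot.1 (h ▸ Subgroup.subset_normalClosure (Set.mem_singleton x)))
  exact hclosure x (infinite_of_disjoint_minisocle hbot (hdisj.mono_right hle)) hdisj hker

theorem GammaPFaithful.subsingleton [Subsingleton H] {σ : N → (H →L[ℂ] H)}
    (hσ : GammaPFaithful ζ N σ) : Subsingleton N :=
  subsingleton_of_forall_eq 1 fun x => hσ x ⟨1, fun _ => Subsingleton.elim _ _⟩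

theorem exists_irreducible_pFaithful_of_nontrivial [Countable Γ] [N.Normal]
    (hle : minisocle Γ ≤ N) (hζ : IsMultiplier ζ) (hnorm : IsNormalised ζ)
    {σ : N → (H →L[ℂ] H)} (hσ : IsZetaRepOn ζ N σ) (hirr : IsIrreducibleRep σ)
    (hfaith : GammaPFaithful ζ N σ) [Nontrivial H]
    (hab : ∀ g : Γ, Disjoint (Subgroup.normalClosure {g}) N →
      Finite (Abelianization (Subgroup.normalClosure {g}))) :
    ∃ (K : Type u) (_ : NormedAddCommGroup K) (_ : InnerProductSpace ℂ K) (_ : CompleteSpace K)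
      (π : Γ → (K →L[ℂ] K)), IsZetaRep ζ π ∧ IsIrreducibleRep π ∧ PFaithful π := by
  obtain ⟨K, _, _, _, π, hπ, S, hπirr, hinj, hS, hclosure⟩ :=
    exists_irreducible_extension hζ hσ hirr hab
  have hN : Disjoint hπ.projKer N := Subgroup.disjoint_def.2 fun {y} hy hyN =>
    congrArg Subtype.val (hfaith.eq_one_of_mem_projKer hnorm hπ hinj hS (y := ⟨y, hyN⟩) hy)
  exact ⟨K, _, _, _, π, hπ, hπirr, hπ.pFaithful hle hN hclosure⟩

end Extension

theorem stmt_16_general.{u} {Γ : Type u} [Group Γ] [Countable Γ] {N : Subgroup Γ} [N.Normal]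
    (hle : minisocle Γ ≤ N)
    (hab : ∀ g : Γ, Disjoint (Subgroup.normalClosure {g}) N →
      Finite (Abelianization (Subgroup.normalClosure {g})))
    {ζ : Γ → Γ → Circle} (hζ : IsMultiplier ζ) (hnorm : IsNormalised ζ)
    {H : Type*} [NormedAddCommGroup H] [InnerProductSpace ℂ H] [CompleteSpace H]
    {σ : N → (H →L[ℂ] H)} (hσ : IsZetaRepOn ζ N σ) (hirr : IsIrreducibleRep σ)
    (hfaith : GammaPFaithful ζ N σ) :
    ∃ (K : Type u) (_ : NormedAddCommGroup K) (_ : InnerProductSpace ℂ K) (_ : CompleteSpace K)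
      (π : Γ → (K →L[ℂ] K)), IsZetaRep ζ π ∧ IsIrreducibleRep π ∧ PFaithful π := by
  rcases subsingleton_or_nontrivial H with hH | hH
  · have := hfaith.subsingleton
    have htriv : IsZetaRepOn ζ N fun _ => (1 : ℂ →L[ℂ] ℂ) := ⟨fun _ => one_mem _, rfl, fun x y => by
      rw [Subsingleton.elim x 1, OneMemClass.coe_one, hζ.1, Circle.coe_one, one_smul, one_mul]⟩
    exact exists_irreducible_pFaithful_of_nontrivial hle hζ hnorm htriv
      (fun K _ _ => eq_bot_or_eq_top K) (fun x _ => Subsingleton.elim x 1) hab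
  · exact exists_irreducible_pFaithful_of_nontrivial hle hζ hnorm hσ hirr hfaith hab

/-- If a countable group Γ with Property (Fab) is such that MS(Γ) has an irreducible
Γ-P-faithful ζ-representation, then Γ has an irreducible projectively faithful
ζ-representation. -/
theorem stmt_16 (Γ : Type) [Group Γ] [Countable Γ] (hFab : PropertyFab Γ)
    (ζ : Γ → Γ → Circle) (hζ : IsMultiplier ζ) (hnorm : IsNormalised ζ)
    (hex : ∃ (H : Type) (_ : NormedAddCommGroup H) (_ : InnerProductSpace ℂ H)
        (_ : CompleteSpace H) (σ : minisocle Γ → (H →L[ℂ] H)),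
        IsZetaRepOn ζ (minisocle Γ) σ ∧ IsIrreducibleRep σ ∧
          GammaPFaithful ζ (minisocle Γ) σ) :
    ∃ (H : Type) (_ : NormedAddCommGroup H) (_ : InnerProductSpace ℂ H) (_ : CompleteSpace H)
      (π : Γ → (H →L[ℂ] H)),
      IsZetaRep ζ π ∧ IsIrreducibleRep π ∧ PFaithful π := by
  obtain ⟨H, _, _, _, σ, hσ, hirr, hfaith⟩ := hex
  have : (minisocle Γ).Normal := normal_minisocle
  exact stmt_16_general le_rfl (fun g _ => hFab g) hζ hnorm hσ hirr hfaith
end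

section
/- Let L be an abelian group, let X(L) be the group of homomorphisms from L to the circle group T, equipped with the topology of pointwise convergence, and let M be a dense subgroup of X(L). Then the direct product group L × M has a projective unitary representation which is both irreducible and projectively faithful. -/
/-- The topology of pointwise convergence on the character group `X(L) = Hom(L, T)`. -/
noncomputable def homTopology (L : Type) [CommGroup L] : TopologicalSpace (L →* Circle) :=
  TopologicalSpace.induced (fun f : L →* Circle => (f : L → Circle)) inferInstance

/-!
On `ℓ²(L)` the group `L` acts by translations and `M` acts by multiplication by characters; the two
actions commute up to scalars, which gives a projective representation of `L × M`. An operator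
commuting with the multiplications is diagonal because `M` separates the points of `L`, and a
diagonal operator commuting with the translations is scalar because `L` acts transitively on itself;
hence irreducibility. A dense `M` separates the points of `L` because `X(L)` does, and `X(L)` does
because `ℚ / ℤ` is an injective cogenerator embedded in the circle.
-/

open scoped lp ENNReal

section Characters

theorem exists_injective_ratAddCircle_hom_circle :
    ∃ f : AddCircle (1 : ℚ) →+ Additive Circle, Function.Injective f := by
  let castHom : ℚ →+ AddCircle (1 : ℝ) :=
    (QuotientAddGroup.mk' _).comp (Rat.castHom ℝ).toAddMonoidHom
  have ker_castHom : AddSubgroup.zmultiples (1 : ℚ) = castHom.ker := by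
    ext q
    have cast_eq_zero : castHom q = 0 ↔ ∃ n : ℤ, n • (1 : ℝ) = q := AddCircle.coe_eq_zero_iff 1
    rw [AddMonoidHom.mem_ker, cast_eq_zero, AddSubgroup.mem_zmultiples_iff]
    simp only [zsmul_one]
    exact_mod_cast Iff.rfl
  exact ⟨AddCircle.toCircle_addChar.toAddMonoidHom.comp
      (QuotientAddGroup.lift _ castHom ker_castHom.le),
    (AddCircle.injective_toCircle one_ne_zero).comp
      ((QuotientAddGroup.injective_lift_iff _ _ _).2 ker_castHom)⟩

theorem injective_eval_circle (L : Type*) [CommGroup L] :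
    Function.Injective (MonoidHom.eval : L →* (L →* Circle) →* Circle) := by
  obtain ⟨f, hf⟩ := exists_injective_ratAddCircle_hom_circle
  refine (injective_iff_map_eq_one _).2 fun a ha => ?_
  refine CharacterModule.eq_zero_of_character_apply (A := Additive L) fun c => ?_
  exact (map_eq_zero_iff f hf).1 (DFunLike.congr_fun ha (AddMonoidHom.toMultiplicative (f.comp c)))

theorem injective_flip_subtype_of_dense {L : Type} [CommGroup L] {M : Subgroup (L →* Circle)}
    (hM : @Dense (L →* Circle) (homTopology L) (M : Set (L →* Circle))) :
    Function.Injective M.subtype.flip := by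
  let _ : TopologicalSpace (L →* Circle) := homTopology L
  have continuous_eval (x : L) : Continuous fun χ : L →* Circle => χ x :=
    (continuous_apply x).comp continuous_induced_dom
  intro x y hxy
  have eqOn_M : Set.EqOn (fun χ : L →* Circle => χ x) (fun χ => χ y) M := fun χ hχ =>
    DFunLike.congr_fun hxy (⟨χ, hχ⟩ : M)
  exact injective_eval_circle L <| MonoidHom.ext <| congrFun <|
    (continuous_eval x).ext_on hM (continuous_eval y) eqOn_M

end Characters

section Schur

variable {G : Type*} [Group G] {H : Type*} [NormedAddCommGroup H] [InnerProductSpace ℂ H]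
  [CompleteSpace H] {π : G → (H →L[ℂ] H)}

theorem IsProjUnitaryRep.exists_adjoint_eq_smul (hπ : IsProjUnitaryRep π) (g : G) :
    ∃ z : Circle, (π g).adjoint = (z : ℂ) • π g⁻¹ := by
  obtain ⟨unitary, map_one, map_mul⟩ := hπ
  obtain ⟨z, hz⟩ := map_mul g⁻¹ g
  rw [inv_mul_cancel, map_one] at hz
  have inv_eq : π g⁻¹ = (z : ℂ) • (π g).adjoint := by
    calc π g⁻¹ = π g⁻¹ * π g * star (π g) := by
          rw [mul_assoc, (Unitary.mem_iff.1 (unitary g)).2, mul_one]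
      _ = (z : ℂ) • (π g).adjoint := by rw [hz, smul_one_mul]; rfl
  exact ⟨z⁻¹, by rw [inv_eq, Circle.coe_inv, inv_smul_smul₀ z.coe_ne_zero]⟩

theorem IsProjUnitaryRep.commute_starProjection (hπ : IsProjUnitaryRep π) {K : Submodule ℂ H}
    [K.HasOrthogonalProjection] (hK : ∀ g, ∀ v ∈ K, π g v ∈ K) (g : G) :
    Commute K.starProjection (π g) := by
  rw [ContinuousLinearMap.IsIdempotentElem.commute_iff K.isIdempotentElem_starProjection,
    K.range_starProjection, K.ker_starProjection]
  refine ⟨hK g, ContinuousLinearMap.orthogonal_mem_invtSubmodule fun v hv => ?_⟩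
  obtain ⟨z, hz⟩ := hπ.exists_adjoint_eq_smul g
  rw [hz]
  exact K.smul_mem _ (hK g⁻¹ v hv)

theorem IsProjUnitaryRep.isIrreducibleRep_of_commutant_scalar (hπ : IsProjUnitaryRep π)
    (hscalar : ∀ T : H →L[ℂ] H, (∀ g, Commute T (π g)) → ∃ c : ℂ, T = c • 1) :
    IsIrreducibleRep π := by
  intro K hK_closed hK
  have : CompleteSpace K := hK_closed.completeSpace_coe
  obtain ⟨c, hc⟩ := hscalar K.starProjection (hπ.commute_starProjection hK)
  rw [← K.range_starProjection, hc]
  obtain rfl | hc0 := eq_or_ne c 0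
  · left
    simp
  · right
    exact LinearMap.range_eq_top.2 fun v => ⟨c⁻¹ • v, smul_inv_smul₀ hc0 v⟩

end Schur

section Monomial

variable {ι : Type*}

theorem memℓp_circle_mul_comp_perm {p : ℝ≥0∞} (hp : 0 < p.toReal) {f : ι → ℂ} (hf : Memℓp f p)
    (u : ι → Circle) (σ : Equiv.Perm ι) : Memℓp (fun x => u x * f (σ x)) p := by
  refine memℓp_gen ?_
  simpa only [norm_mul, Circle.norm_coe, one_mul, Function.comp_def] using
    σ.summable_iff.2 (hf.summable hp)

/-- The monomial (weighted permutation) operator `f ↦ u · (f ∘ σ)` on `ℓ²(ι)`. -/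
noncomputable def monomialIsometry (u : ι → Circle) (σ : Equiv.Perm ι) :
    ℓ²(ι, ℂ) →ₗᵢ[ℂ] ℓ²(ι, ℂ) where
  toFun f := ⟨fun x => u x * f (σ x), memℓp_circle_mul_comp_perm (by simp) (lp.memℓp f) u σ⟩
  map_add' f g := by ext x; exact mul_add _ _ _
  map_smul' c f := by ext x; exact mul_left_comm _ _ _
  norm_map' f := by
    have norm_apply (x : ι) : ‖(u x : ℂ) * f (σ x)‖ = ‖f (σ x)‖ := by
      rw [norm_mul, Circle.norm_coe, one_mul]
    rw [lp.norm_eq_tsum_rpow (by simp), lp.norm_eq_tsum_rpow (by simp),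
      ← σ.tsum_eq fun x => ‖f x‖ ^ (2 : ℝ≥0∞).toReal]
    exact congr((∑' x, $(norm_apply _) ^ (2 : ℝ≥0∞).toReal) ^ (1 / (2 : ℝ≥0∞).toReal))

variable (u : ι → Circle) (σ : Equiv.Perm ι)

@[simp]
theorem monomialIsometry_apply (f : ℓ²(ι, ℂ)) (x : ι) :
    monomialIsometry u σ f x = u x * f (σ x) := rfl

theorem monomialIsometry_surjective : Function.Surjective (monomialIsometry u σ) := fun f =>
  ⟨monomialIsometry (fun x => (u (σ.symm x))⁻¹) σ.symm f, by ext x; simp⟩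

/-- The monomial isometry `f ↦ u · (f ∘ σ)` as an element of the algebra of bounded operators on
`ℓ²(ι)`. -/
noncomputable def monomialOperator : ℓ²(ι, ℂ) →L[ℂ] ℓ²(ι, ℂ) :=
  (monomialIsometry u σ).toContinuousLinearMap

@[simp]
theorem monomialOperator_apply (f : ℓ²(ι, ℂ)) (x : ι) :
    monomialOperator u σ f x = u x * f (σ x) := rfl

theorem monomialOperator_mem_unitary :
    monomialOperator u σ ∈ unitary (ℓ²(ι, ℂ) →L[ℂ] ℓ²(ι, ℂ)) :=
  (Unitary.linearIsometryEquiv.symm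
    (LinearIsometryEquiv.ofSurjective _ (monomialIsometry_surjective u σ))).2

variable {u σ} in
theorem monomialOperator_eq_smul_one_iff {z : Circle} :
    monomialOperator u σ = (z : ℂ) • 1 ↔ σ = 1 ∧ ∀ x, u x = z := by
  refine ⟨fun h => ?_, fun ⟨hσ, hu⟩ => by ext f x; simp [hσ, hu]⟩
  classical
  have apply_eq (y x : ι) : u x * (Pi.single y 1 : ι → ℂ) (σ x) = z * (Pi.single y 1 : ι → ℂ) x :=
    congr($h (lp.single 2 y 1) x)
  have σ_apply (x : ι) : σ x = x := by
    by_contra hx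
    exact z.coe_ne_zero (by simpa [hx] using (apply_eq x x).symm)
  exact ⟨Equiv.ext σ_apply, fun x => Circle.ext (by simpa [σ_apply] using apply_eq x x)⟩

variable [DecidableEq ι]

theorem monomialOperator_single (y : ι) :
    monomialOperator u σ (lp.single 2 (σ y) 1) = (u y : ℂ) • lp.single 2 y (1 : ℂ) := by
  ext x
  obtain rfl | hxy := eq_or_ne x y
  · simp
  · simp [hxy]

variable {u σ} in
theorem mul_apply_single_of_commute_monomialOperator {T : ℓ²(ι, ℂ) →L[ℂ] ℓ²(ι, ℂ)}
    (hT : Commute T (monomialOperator u σ)) (x y : ι) :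
    u y * T (lp.single 2 y 1) x = u x * T (lp.single 2 (σ y) 1) (σ x) := by
  have h := congr($hT.eq (lp.single 2 (σ y) 1) x)
  simpa [monomialOperator_single] using h

theorem eq_smul_one_of_apply_single {T : ℓ²(ι, ℂ) →L[ℂ] ℓ²(ι, ℂ)} {c : ℂ}
    (offDiag : ∀ x y, x ≠ y → T (lp.single 2 y 1) x = 0) (diag : ∀ x, T (lp.single 2 x 1) x = c) :
    T = c • 1 := by
  refine lp.ext_continuousLinearMap (by simp) fun y => ?_
  ext x
  obtain rfl | hxy := eq_or_ne x y
  · simp [diag]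
  · simp [offDiag x y hxy, hxy]

end Monomial

section Weyl

variable {L M : Type*} [Group L] [Group M] {β : M →* L →* Circle}

/-- The Weyl operators `f ↦ (x ↦ β(m, x) f(a⁻¹x))` on `ℓ²(L)`, for `(a, m) ∈ L × M` and a pairing
`β` of `M` with `L`. For a group `M` of characters of `L`, `β` is the inclusion. -/
noncomputable def weylOperator (β : M →* L →* Circle) (g : L × M) : ℓ²(L, ℂ) →L[ℂ] ℓ²(L, ℂ) :=
  monomialOperator (β g.2) (Equiv.mulLeft g.1⁻¹)

theorem weylOperator_apply (g : L × M) (f : ℓ²(L, ℂ)) (x : L) :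
    weylOperator β g f x = β g.2 x * f (g.1⁻¹ * x) := rfl

theorem weylOperator_mul (g h : L × M) :
    weylOperator β g * weylOperator β h = (β h.2 g.1⁻¹ : ℂ) • weylOperator β (g * h) := by
  ext f x
  simp [weylOperator_apply, mul_assoc, mul_left_comm]

theorem isProjUnitaryRep_weylOperator (β : M →* L →* Circle) :
    IsProjUnitaryRep (weylOperator β) := by
  refine ⟨fun g => monomialOperator_mem_unitary _ _, ?_, fun g h => ⟨_, weylOperator_mul g h⟩⟩
  ext f x
  simp [weylOperator_apply]

theorem exists_eq_smul_one_of_commute_weylOperator (hβ : Function.Injective β.flip)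
    {T : ℓ²(L, ℂ) →L[ℂ] ℓ²(L, ℂ)} (hT : ∀ g, Commute T (weylOperator β g)) :
    ∃ c : ℂ, T = c • 1 := by
  classical
  refine ⟨T (lp.single 2 1 1) 1, eq_smul_one_of_apply_single (fun x y hxy => ?_) fun x => ?_⟩
  · obtain ⟨m, hm⟩ : ∃ m, β m x ≠ β m y := by
      simpa using DFunLike.ne_iff.1 (hβ.ne hxy)
    have h : β m y * T (lp.single 2 y 1) x = β m x * T (lp.single 2 y 1) x := by
      simpa using mul_apply_single_of_commute_monomialOperator (hT (1, m)) x y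
    by_contra h0
    exact hm (Circle.ext (mul_right_cancel₀ h0 h)).symm
  · simpa [weylOperator] using mul_apply_single_of_commute_monomialOperator (hT (x, 1)) x x

theorem isIrreducibleRep_weylOperator (hβ : Function.Injective β.flip) :
    IsIrreducibleRep (weylOperator β) :=
  (isProjUnitaryRep_weylOperator β).isIrreducibleRep_of_commutant_scalar fun _ =>
    exists_eq_smul_one_of_commute_weylOperator hβ

theorem pFaithful_weylOperator (hβ : Function.Injective β) : PFaithful (weylOperator β) := by
  rintro ⟨a, m⟩ ⟨z, hz⟩
  obtain ⟨ha, hm⟩ := monomialOperator_eq_smul_one_iff.1 hz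
  have hm_one : β m = 1 := MonoidHom.ext fun x => by rw [hm x, ← hm 1, map_one, MonoidHom.one_apply]
  exact Prod.ext (by simpa using congr($ha 1)) ((map_eq_one_iff β hβ).1 hm_one)

end Weyl

theorem stmt_18_general.{u, v} {L : Type u} {M : Type v} [Group L] [Group M] (β : M →* L →* Circle)
    (hβ_left : Function.Injective β) (hβ_right : Function.Injective β.flip) :
    ∃ (H : Type u) (_ : NormedAddCommGroup H) (_ : InnerProductSpace ℂ H) (_ : CompleteSpace H)
      (π : L × M → (H →L[ℂ] H)),
      IsProjUnitaryRep π ∧ IsIrreducibleRep π ∧ PFaithful π :=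
  ⟨ℓ²(L, ℂ), inferInstance, inferInstance, inferInstance, weylOperator β,
    isProjUnitaryRep_weylOperator β, isIrreducibleRep_weylOperator hβ_right,
    pFaithful_weylOperator hβ_left⟩

/-- For an abelian group L and a dense subgroup M of X(L), the group L × M has an
irreducible projectively faithful projective unitary representation. -/
theorem stmt_18 (L : Type) [CommGroup L] (M : Subgroup (L →* Circle))
    (hM : @Dense (L →* Circle) (homTopology L) (M : Set (L →* Circle))) :
    ∃ (H : Type) (_ : NormedAddCommGroup H) (_ : InnerProductSpace ℂ H) (_ : CompleteSpace H)
      (π : L × M → (H →L[ℂ] H)),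
      IsProjUnitaryRep π ∧ IsIrreducibleRep π ∧ PFaithful π :=
  stmt_18_general M.subtype M.subtype_injective (injective_flip_subtype_of_dense hM)
end

section
/- (Frucht) For a finite abelian group Γ, the following are equivalent: (i) Γ has a projective unitary representation on some complex Hilbert space which is both irreducible and projectively faithful; (ii) there exists a finite abelian group L such that Γ is isomorphic to the direct product L × L. -/
/-!
If `π` is a projective representation of an abelian group, then `π x` and `π y` commute up to a
scalar `b x y`, and `b` is an alternating bicharacter. When `π` is irreducible, Schur's lemma says
that the radical of `b` is the projective kernel of `π`, so `π` is P-faithful exactly when `b` is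
nondegenerate.

A finite abelian group with such a pairing is a square: if `b x y` has order the exponent of the
group, then `x` and `y` span a hyperbolic plane, a product of two copies of the cyclic group
generated by `b x y`, and the plane is a direct factor whose orthogonal complement carries the
restricted pairing, so one can induct. Conversely `L × L` is isomorphic to `L × L^`, where `L^` is
the character group, and this acts on `ℂ^L` by translations and multiplications by characters.
-/

section Splitting

/-- An abelian group splits as the direct product of a retract and the kernel of the retraction. -/
def mulEquivProdKerOfLeftInverse {G N : Type*} [CommGroup G] [Group N] (r : G →* N)
    (s : N →* G) (h : Function.LeftInverse r s) : G ≃* N × r.ker where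
  toFun g := (r g, ⟨g / s (r g), by simp [MonoidHom.mem_ker, h (r g)]⟩)
  invFun p := s p.1 * p.2
  left_inv g := by simp
  right_inv p := by ext <;> simp [h p.1, MonoidHom.mem_ker.mp p.2.2]
  map_mul' g g' := by ext <;> simp [mul_div_mul_comm]

variable {G N : Type*} [Group G] [Group N]

/-- The homomorphism from the cyclic group generated by `g` which sends `g` to `x`. -/
noncomputable def zpowersLift {g : N} {x : G} (h : orderOf x ∣ orderOf g) :
    Subgroup.zpowers g →* G :=
  monoidHomOfForallMemZpowers (g := ⟨g, Subgroup.mem_zpowers g⟩)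
    (by rintro ⟨_, i, rfl⟩; exact ⟨i, rfl⟩) (by rwa [Subgroup.orderOf_mk])

lemma zpowersLift_zpow {g : N} {x : G} (h : orderOf x ∣ orderOf g) (i : ℤ) :
    zpowersLift h ⟨g ^ i, i, rfl⟩ = x ^ i := by
  have hpow : (⟨g ^ i, i, rfl⟩ : Subgroup.zpowers g) = ⟨g, Subgroup.mem_zpowers g⟩ ^ i := rfl
  rw [hpow, map_zpow, zpowersLift, monoidHomOfForallMemZpowers_apply_gen]

end Splitting

section SymplecticPairing

variable {G M : Type*} [CommGroup G] [CommGroup M]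

/-- A symplectic pairing, i.e. an alternating nondegenerate bicharacter of an abelian group. It is
encoded as a homomorphism `x ↦ b x` into the characters, so that nondegeneracy is injectivity. -/
structure IsSymplecticPairing (b : G →* G →* M) : Prop where
  self_eq_one (x : G) : b x x = 1
  injective : Function.Injective b

/-- For a pairing `b` all of whose values are powers of `b x y`, the map `u ↦ (b u y, b x u)`: the
coordinates of `u` along the hyperbolic pair `x`, `y` when `b` is symplectic. Its kernel is the
orthogonal complement of `x` and `y`. -/
def hyperbolicCoords (b : G →* G →* M) {x y : G}
    (h : ∀ u v, b u v ∈ Subgroup.zpowers (b x y)) :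
    G →* Subgroup.zpowers (b x y) × Subgroup.zpowers (b x y) :=
  ((b.flip y).codRestrict _ (h · y)).prod ((b x).codRestrict _ (h x))

lemma hyperbolicCoords_apply {b : G →* G →* M} {x y : G}
    (h : ∀ u v, b u v ∈ Subgroup.zpowers (b x y)) (u : G) :
    hyperbolicCoords b h u = (⟨b u y, h u y⟩, ⟨b x u, h x u⟩) := rfl

lemma mem_ker_hyperbolicCoords {b : G →* G →* M} {x y : G}
    {h : ∀ u v, b u v ∈ Subgroup.zpowers (b x y)} {u : G} :
    u ∈ (hyperbolicCoords b h).ker ↔ b u y = 1 ∧ b x u = 1 := by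
  rw [MonoidHom.mem_ker, hyperbolicCoords_apply, Prod.mk_eq_one, Subgroup.mk_eq_one,
    Subgroup.mk_eq_one]

namespace IsSymplecticPairing

variable {b : G →* G →* M} {x y : G}

lemma of_subsingleton [Subsingleton G] (b : G →* G →* M) : IsSymplecticPairing b :=
  ⟨fun x => by rw [Subsingleton.elim x 1, map_one], Function.injective_of_subsingleton b⟩

lemma swap (hb : IsSymplecticPairing b) (x y : G) : b y x = (b x y)⁻¹ := by
  refine eq_inv_of_mul_eq_one_right ?_
  simpa [hb.self_eq_one] using hb.self_eq_one (x * y)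

lemma orderOf_dvd (hb : IsSymplecticPairing b) {u : G} {ζ : M}
    (h : ∀ v, b u v ∈ Subgroup.zpowers ζ) : orderOf u ∣ orderOf ζ := by
  refine orderOf_dvd_of_pow_eq_one ((injective_iff_map_eq_one b).mp hb.injective _ ?_)
  ext v
  rw [map_pow, MonoidHom.pow_apply, MonoidHom.one_apply, ← orderOf_dvd_iff_pow_eq_one]
  exact orderOf_dvd_of_mem_zpowers (h v)

/-- The inclusion of the hyperbolic plane spanned by `x` and `y`, in the coordinates of
`hyperbolicCoords`. -/
noncomputable def hyperbolicIncl (hb : IsSymplecticPairing b)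
    (h : ∀ u v, b u v ∈ Subgroup.zpowers (b x y)) :
    Subgroup.zpowers (b x y) × Subgroup.zpowers (b x y) →* G :=
  (zpowersLift (hb.orderOf_dvd (h x))).coprod (zpowersLift (hb.orderOf_dvd (h y)))

lemma hyperbolicIncl_zpow (hb : IsSymplecticPairing b)
    (h : ∀ u v, b u v ∈ Subgroup.zpowers (b x y)) (i j : ℤ) :
    hb.hyperbolicIncl h (⟨b x y ^ i, i, rfl⟩, ⟨b x y ^ j, j, rfl⟩) = x ^ i * y ^ j := by
  rw [hyperbolicIncl, MonoidHom.coprod_apply, zpowersLift_zpow, zpowersLift_zpow]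

lemma leftInverse_hyperbolicCoords (hb : IsSymplecticPairing b)
    (h : ∀ u v, b u v ∈ Subgroup.zpowers (b x y)) :
    Function.LeftInverse (hyperbolicCoords b h) (hb.hyperbolicIncl h) := by
  rintro ⟨⟨_, i, rfl⟩, ⟨_, j, rfl⟩⟩
  rw [hyperbolicIncl_zpow, hyperbolicCoords_apply]
  ext <;> simp [hb.self_eq_one]

lemma restrict_ker_hyperbolicCoords (hb : IsSymplecticPairing b)
    (h : ∀ u v, b u v ∈ Subgroup.zpowers (b x y)) :
    IsSymplecticPairing ((b.comp (hyperbolicCoords b h).ker.subtype).compl₂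
      (hyperbolicCoords b h).ker.subtype) where
  self_eq_one u := hb.self_eq_one u
  injective := by
    refine (injective_iff_map_eq_one _).mpr fun u hu => Subtype.ext ?_
    refine (injective_iff_map_eq_one b).mp hb.injective _ (MonoidHom.ext fun v => ?_)
    obtain ⟨huy, hxu⟩ := mem_ker_hyperbolicCoords.mp u.2
    obtain ⟨⟨⟨⟨_, i, rfl⟩, ⟨_, j, rfl⟩⟩, w⟩, rfl⟩ :=
      (mulEquivProdKerOfLeftInverse _ _ (hb.leftInverse_hyperbolicCoords h)).symm.surjective v
    have huw : b u w = 1 := DFunLike.congr_fun hu w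
    have hux : b u x = 1 := by rw [hb.swap x u, hxu, inv_one]
    change b u (hb.hyperbolicIncl h _ * w) = 1
    simp [hyperbolicIncl_zpow, hux, huy, huw]

/-- Take `x` of maximal order and `y` such that `b x y` generates the values of `b x`: then the
order of `b x y` is the exponent of the group. -/
lemma exists_forall_mem_zpowers [Finite G] {R : Type*} [CommRing R] [IsDomain R]
    {b : G →* G →* Rˣ} (hb : IsSymplecticPairing b) :
    ∃ x y, ∀ u v, b u v ∈ Subgroup.zpowers (b x y) := by
  obtain ⟨x, hx⟩ := Monoid.exists_orderOf_eq_exponent (Monoid.ExponentExists.of_finite (G := G))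
  have : Finite (b x).range := Set.finite_range (b x)
  obtain ⟨⟨_, y, rfl⟩, hy⟩ := IsCyclic.exists_generator (α := (b x).range)
  have hrow (v : G) : b x v ∈ Subgroup.zpowers (b x y) := by
    obtain ⟨i, hi⟩ := hy ⟨b x v, v, rfl⟩
    exact ⟨i, congrArg Subtype.val hi⟩
  have horder : orderOf (b x y) = Monoid.exponent G :=
    Nat.dvd_antisymm ((orderOf_map_dvd (b x) y).trans (Monoid.order_dvd_exponent y))
      (hx ▸ hb.orderOf_dvd hrow)
  have : NeZero (Monoid.exponent G) := ⟨Monoid.exponent_ne_zero_of_finite⟩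
  refine ⟨x, y, fun u v => ?_⟩
  rw [(IsPrimitiveRoot.iff_orderOf.mpr horder).zpowers_eq, mem_rootsOfUnity, ← map_pow,
    Monoid.pow_exponent_eq_one, map_one]

lemma card_ker_hyperbolicCoords_lt [Finite G] [Nontrivial G] (hb : IsSymplecticPairing b)
    (h : ∀ u v, b u v ∈ Subgroup.zpowers (b x y)) :
    Nat.card (hyperbolicCoords b h).ker < Nat.card G := by
  refine lt_of_le_of_ne (Subgroup.card_le_card_group _) fun hcard => ?_
  have hx : x ∈ (hyperbolicCoords b h).ker :=
    (hyperbolicCoords b h).ker.eq_top_of_card_eq hcard ▸ Subgroup.mem_top x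
  have hxy : b x y = 1 := (mem_ker_hyperbolicCoords.mp hx).1
  have hb1 : b = 1 := by
    ext u v
    simpa [hxy] using h u v
  exact not_subsingleton G ⟨fun u v => hb.injective (by rw [hb1]; rfl)⟩

universe v in
theorem exists_mulEquiv_prod_self [Finite G] {R : Type v} [CommRing R] [IsDomain R]
    {b : G →* G →* Rˣ} (hb : IsSymplecticPairing b) :
    ∃ (L : Type v) (_ : CommGroup L) (_ : Finite L), Nonempty (G ≃* L × L) := by
  induction hn : Nat.card G using Nat.strong_induction_on generalizing G with
  | _ n ih =>
    subst hn
    rcases subsingleton_or_nontrivial G with hG | hG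
    · have := uniqueOfSubsingleton (1 : G)
      exact ⟨PUnit, inferInstance, inferInstance,
        ⟨MulEquiv.ofUnique.trans MulEquiv.prodUnique.symm⟩⟩
    obtain ⟨x, y, h⟩ := hb.exists_forall_mem_zpowers
    have e := mulEquivProdKerOfLeftInverse _ _ (hb.leftInverse_hyperbolicCoords h)
    have : Finite (Subgroup.zpowers (b x y)) :=
      finite_zpowers.mpr ((b x).isOfFinOrder (isOfFinOrder_of_finite y))
    obtain ⟨L, _, _, ⟨f⟩⟩ :=
      ih _ (hb.card_ker_hyperbolicCoords_lt h) (hb.restrict_ker_hyperbolicCoords h) rfl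
    exact ⟨Subgroup.zpowers (b x y) × L, inferInstance, inferInstance,
      ⟨e.trans (((MulEquiv.refl _).prodCongr f).trans (.prodProdProdComm _ _ _ _))⟩⟩

end IsSymplecticPairing

end SymplecticPairing

section ProjUnitaryRep

variable {G G' H : Type*} [Group G] [Group G'] [NormedAddCommGroup H] [InnerProductSpace ℂ H]
  [CompleteSpace H] {π : G → (H →L[ℂ] H)}

lemma IsProjUnitaryRep.comp (hπ : IsProjUnitaryRep π) (f : G' →* G) :
    IsProjUnitaryRep (π ∘ f) :=
  ⟨fun x => hπ.1 (f x), by simp [hπ.2.1], fun x y => by simpa using hπ.2.2 (f x) (f y)⟩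

lemma PFaithful.comp (hπ : PFaithful π) {f : G' →* G} (hf : Function.Injective f) :
    PFaithful (π ∘ f) :=
  fun x hx => (injective_iff_map_eq_one f).mp hf x (hπ (f x) hx)

lemma PFaithful.subsingleton [Subsingleton H] (hπ : PFaithful π) : Subsingleton G :=
  subsingleton_of_forall_eq 1 fun x => hπ x ⟨1, Subsingleton.elim _ _⟩

lemma IsIrreducibleRep.comp {X X' : Type*} {π : X → (H →L[ℂ] H)} (hπ : IsIrreducibleRep π)
    {f : X' → X} (hf : Function.Surjective f) : IsIrreducibleRep (π ∘ f) :=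
  fun K hcl hK => hπ K hcl (hf.forall.mpr hK)

namespace IsProjUnitaryRep

lemma exists_mul_eq_smul (hπ : IsProjUnitaryRep π) (x y : G) :
    ∃ c : ℂˣ, π x * π y = c • π (x * y) := by
  obtain ⟨z, hz⟩ := hπ.2.2 x y
  exact ⟨Circle.toUnits z, hz⟩

lemma span_orbit_le_comap (hπ : IsProjUnitaryRep π) (v : H) (x : G) :
    Submodule.span ℂ (Set.range (π · v)) ≤
      (Submodule.span ℂ (Set.range (π · v))).comap (π x : H →ₗ[ℂ] H) := by
  rw [Submodule.span_le]
  rintro _ ⟨y, rfl⟩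
  obtain ⟨c, hc⟩ := hπ.exists_mul_eq_smul x y
  change (π x * π y) v ∈ Submodule.span ℂ (Set.range (π · v))
  rw [hc]
  exact Submodule.smul_mem _ (c : ℂ) (Submodule.subset_span ⟨x * y, rfl⟩)

lemma finiteDimensional [Finite G] (hπ : IsProjUnitaryRep π) (hirr : IsIrreducibleRep π) :
    FiniteDimensional ℂ H := by
  rcases subsingleton_or_nontrivial H with hH | hH
  · infer_instance
  obtain ⟨v, hv⟩ := exists_ne (0 : H)
  let K := Submodule.span ℂ (Set.range (π · v))
  have : FiniteDimensional ℂ K := FiniteDimensional.span_of_finite ℂ (Set.finite_range _)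
  have hvK : v ∈ K := Submodule.subset_span ⟨1, by simp [hπ.2.1]⟩
  have hK : K = ⊤ :=
    (hirr K K.closed_of_finiteDimensional (hπ.span_orbit_le_comap v)).resolve_left
      (K.ne_bot_iff.mpr ⟨v, hvK, hv⟩)
  exact ⟨hK ▸ Submodule.fg_span (Set.finite_range _)⟩

end IsProjUnitaryRep

lemma IsIrreducibleRep.exists_eq_smul_one {X : Type*} {π : X → (H →L[ℂ] H)}
    [FiniteDimensional ℂ H] [Nontrivial H] (hπ : IsIrreducibleRep π) {T : H →L[ℂ] H}
    (hT : ∀ x, Commute T (π x)) : ∃ c : ℂ, T = c • (1 : H →L[ℂ] H) := by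
  obtain ⟨c, hc⟩ := Module.End.exists_eigenvalue (T : H →ₗ[ℂ] H)
  let K := Module.End.eigenspace (T : H →ₗ[ℂ] H) c
  have hK (v : H) : v ∈ K ↔ T v = c • v := Module.End.mem_eigenspace_iff
  have htop : K = ⊤ := by
    refine (hπ K K.closed_of_finiteDimensional fun x v hv => ?_).resolve_left hc
    rw [hK] at hv ⊢
    change (T * π x) v = c • π x v
    rw [hT x, mul_apply_eq_comp, hv, map_smul]
  exact ⟨c, ContinuousLinearMap.ext fun v => (hK v).mp (htop ▸ Submodule.mem_top)⟩

lemma IsProjUnitaryRep.mem_projKer_of_commute [Finite G] [Nontrivial H]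
    (hπ : IsProjUnitaryRep π) (hirr : IsIrreducibleRep π) {x : G}
    (hx : ∀ y, Commute (π x) (π y)) : x ∈ ProjKer π := by
  have := hπ.finiteDimensional hirr
  obtain ⟨c, hc⟩ := hirr.exists_eq_smul_one hx
  have hnorm : ‖c‖ = 1 := by
    simpa [hc, norm_smul] using CStarRing.norm_of_mem_unitary (hπ.1 x)
  exact ⟨⟨c, mem_sphere_zero_iff_norm.mpr hnorm⟩, hc⟩

end ProjUnitaryRep

section CommutatorPairing

variable {G H : Type*} [CommGroup G] [NormedAddCommGroup H] [InnerProductSpace ℂ H]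
  [CompleteSpace H] {π : G → (H →L[ℂ] H)}

namespace IsProjUnitaryRep

lemma exists_mul_eq_smul_mul (hπ : IsProjUnitaryRep π) (x y : G) :
    ∃ c : ℂˣ, π x * π y = c • (π y * π x) := by
  obtain ⟨c, hc⟩ := hπ.exists_mul_eq_smul x y
  obtain ⟨d, hd⟩ := hπ.exists_mul_eq_smul y x
  exact ⟨c / d, by rw [hc, hd, mul_comm y x, smul_smul, div_mul_cancel]⟩

/-- The scalar `c` in `π x * π y = c • (π y * π x)`. -/
noncomputable def commutatorScalar (hπ : IsProjUnitaryRep π) (x y : G) : ℂˣ :=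
  (hπ.exists_mul_eq_smul_mul x y).choose

lemma mul_eq_commutatorScalar_smul (hπ : IsProjUnitaryRep π) (x y : G) :
    π x * π y = hπ.commutatorScalar x y • (π y * π x) :=
  (hπ.exists_mul_eq_smul_mul x y).choose_spec

variable [Nontrivial H]

lemma commutatorScalar_eq (hπ : IsProjUnitaryRep π) {x y : G} {c : ℂˣ}
    (h : π x * π y = c • (π y * π x)) : hπ.commutatorScalar x y = c := by
  have hne : π y * π x ≠ 0 :=
    (Unitary.toUnits ⟨π y * π x, mul_mem (hπ.1 y) (hπ.1 x)⟩).ne_zero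
  rw [hπ.mul_eq_commutatorScalar_smul] at h
  exact Units.ext (smul_left_injective ℂ hne h)

lemma commutatorScalar_self (hπ : IsProjUnitaryRep π) (x : G) : hπ.commutatorScalar x x = 1 :=
  hπ.commutatorScalar_eq (one_smul _ _).symm

lemma commutatorScalar_swap (hπ : IsProjUnitaryRep π) (x y : G) :
    hπ.commutatorScalar y x = (hπ.commutatorScalar x y)⁻¹ :=
  hπ.commutatorScalar_eq (by rw [hπ.mul_eq_commutatorScalar_smul x y, inv_smul_smul])

lemma commutatorScalar_mul_left (hπ : IsProjUnitaryRep π) (x x' y : G) :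
    hπ.commutatorScalar (x * x') y = hπ.commutatorScalar x y * hπ.commutatorScalar x' y := by
  obtain ⟨d, hd⟩ := hπ.exists_mul_eq_smul x x'
  set c := hπ.commutatorScalar x y
  set c' := hπ.commutatorScalar x' y
  refine hπ.commutatorScalar_eq (MulAction.injective d ?_)
  calc d • (π (x * x') * π y)
      = π x * (π x' * π y) := by rw [← smul_mul_assoc, ← hd, mul_assoc]
    _ = c' • ((π x * π y) * π x') := by
      rw [hπ.mul_eq_commutatorScalar_smul x' y, mul_smul_comm, mul_assoc]
    _ = (c * c') • (π y * (π x * π x')) := by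
      rw [hπ.mul_eq_commutatorScalar_smul x y, smul_mul_assoc, smul_smul, mul_assoc, mul_comm c']
    _ = d • (c * c') • (π y * π (x * x')) := by rw [hd, mul_smul_comm, smul_comm]

lemma commutatorScalar_mul_right (hπ : IsProjUnitaryRep π) (x y y' : G) :
    hπ.commutatorScalar x (y * y') = hπ.commutatorScalar x y * hπ.commutatorScalar x y' := by
  simp only [hπ.commutatorScalar_swap _ x, hπ.commutatorScalar_mul_left, mul_inv]

/-- The commutator pairing of a projective representation `π` of an abelian group: the bicharacter
sending `x`, `y` to the scalar `π x * π y * (π x)⁻¹ * (π y)⁻¹`. -/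
noncomputable def commutatorPairing (hπ : IsProjUnitaryRep π) : G →* G →* ℂˣ :=
  .mk' (fun x => .mk' (hπ.commutatorScalar x) (hπ.commutatorScalar_mul_right x))
    fun x x' => MonoidHom.ext fun y => hπ.commutatorScalar_mul_left x x' y

/-- By Schur's lemma the radical of the commutator pairing is the projective kernel. -/
lemma isSymplecticPairing_commutatorPairing [Finite G] (hπ : IsProjUnitaryRep π)
    (hirr : IsIrreducibleRep π) (hfaith : PFaithful π) :
    IsSymplecticPairing hπ.commutatorPairing where
  self_eq_one := hπ.commutatorScalar_self
  injective := by
    refine (injective_iff_map_eq_one _).mpr fun x hx => ?_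
    refine hfaith x (hπ.mem_projKer_of_commute hirr fun y => ?_)
    have hxy : hπ.commutatorScalar x y = 1 := DFunLike.congr_fun hx y
    rw [Commute, SemiconjBy, hπ.mul_eq_commutatorScalar_smul, hxy, one_smul]

end IsProjUnitaryRep

theorem IsProjUnitaryRep.exists_mulEquiv_prod_self [Finite G] (hπ : IsProjUnitaryRep π)
    (hirr : IsIrreducibleRep π) (hfaith : PFaithful π) :
    ∃ (L : Type) (_ : CommGroup L) (_ : Finite L), Nonempty (G ≃* L × L) := by
  rcases subsingleton_or_nontrivial H with hH | hH
  · have := hfaith.subsingleton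
    exact (IsSymplecticPairing.of_subsingleton (1 : G →* G →* ℂˣ)).exists_mulEquiv_prod_self
  · exact (hπ.isSymplecticPairing_commutatorPairing hirr hfaith).exists_mulEquiv_prod_self

end CommutatorPairing

section WeylRep

lemma sum_character_apply_eq_zero {L R : Type*} [CommGroup L] [Finite L] [CommRing R] [IsDomain R]
    [HasEnoughRootsOfUnity R (Monoid.exponent L)] [Fintype (L →* Rˣ)] {t : L} (ht : t ≠ 1) :
    ∑ χ : L →* Rˣ, (χ t : R) = 0 := by
  obtain ⟨χ, hχ⟩ := CommGroup.exists_apply_ne_one_of_hasEnoughRootsOfUnity L R ht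
  exact sum_hom_units_eq_zero ((Units.coeHom R).comp (MonoidHom.eval t)) fun h =>
    hχ (Units.ext (DFunLike.congr_fun h χ))

lemma norm_character_apply {L : Type*} [CommGroup L] [Finite L] (χ : L →* ℂˣ) (t : L) :
    ‖(χ t : ℂ)‖ = 1 :=
  (((Units.coeHom ℂ).comp χ).isOfFinOrder (isOfFinOrder_of_finite t)).norm_eq_one

variable {L : Type*} [CommGroup L] [Fintype L]

/-- The Weyl operator on `ℂ^L` attached to `p = (a, χ)`: translation by `a` followed by
multiplication by `χ`. Characters are `ℂˣ`-valued; their values have norm one as `L` is finite. -/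
noncomputable def weylIsometry (p : L × (L →* ℂˣ)) :
    EuclideanSpace ℂ L →ₗᵢ[ℂ] EuclideanSpace ℂ L where
  toFun f := WithLp.toLp 2 fun t => p.2 t * f (p.1⁻¹ * t)
  map_add' f g := by ext t; simp [mul_add]
  map_smul' c f := by ext t; simp [mul_left_comm]
  norm_map' f := by
    simp only [EuclideanSpace.norm_eq]
    congr 1
    exact Fintype.sum_equiv (Equiv.mulLeft p.1⁻¹) _ _ fun t => by simp [norm_character_apply]

/-- The Weyl representation of `L × L^` on `ℂ^L`, where `L^` is the group of characters of `L`. -/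
noncomputable def weylRep (p : L × (L →* ℂˣ)) :
    EuclideanSpace ℂ L →L[ℂ] EuclideanSpace ℂ L :=
  (weylIsometry p).toContinuousLinearMap

lemma weylRep_apply (p : L × (L →* ℂˣ)) (f : EuclideanSpace ℂ L) (t : L) :
    weylRep p f t = p.2 t * f (p.1⁻¹ * t) := rfl

lemma weylRep_mul (p q : L × (L →* ℂˣ)) :
    weylRep p * weylRep q = q.2 p.1⁻¹ • weylRep (p * q) := by
  ext f t
  simp [weylRep_apply, Units.smul_def, mul_assoc, mul_left_comm]

lemma isProjUnitaryRep_weylRep : IsProjUnitaryRep (weylRep (L := L)) := by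
  refine ⟨fun p => ?_, ?_, fun p q => ?_⟩
  · exact (Unitary.linearIsometryEquiv.symm ((weylIsometry p).toLinearIsometryEquiv rfl)).2
  · ext f t
    simp [weylRep_apply]
  · exact ⟨⟨q.2 p.1⁻¹, mem_sphere_zero_iff_norm.mpr (norm_character_apply _ _)⟩, weylRep_mul p q⟩

lemma pFaithful_weylRep : PFaithful (weylRep (L := L)) := by
  classical
  rintro ⟨a, χ⟩ ⟨z, hz⟩
  have h (f : EuclideanSpace ℂ L) (t : L) : (χ t : ℂ) * f (a⁻¹ * t) = z * f t := by
    rw [← weylRep_apply (a, χ), hz]; rfl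
  have ha : a = 1 := by
    by_contra hne
    simpa [hne] using h (EuclideanSpace.single 1 1) a
  have hχ (t : L) : (χ t : ℂ) = z := by
    simpa [ha] using h (EuclideanSpace.single t 1) t
  have hχ1 : χ = 1 := by
    ext t
    rw [hχ t, ← hχ 1, map_one, MonoidHom.one_apply]
  rw [ha, hχ1, Prod.mk_one_one]

lemma sum_smul_weylRep [DecidableEq L] [Fintype (L →* ℂˣ)] (s : L) (f : EuclideanSpace ℂ L) :
    ∑ χ : L →* ℂˣ, (χ s⁻¹ : ℂ) • weylRep (1, χ) f =
      (Fintype.card (L →* ℂˣ) * f s : ℂ) • EuclideanSpace.single s 1 := by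
  ext t
  have hcoord : (∑ χ : L →* ℂˣ, (χ s⁻¹ : ℂ) • weylRep (1, χ) f) t =
      (∑ χ : L →* ℂˣ, (χ (s⁻¹ * t) : ℂ)) * f t := by
    simp [weylRep_apply, Finset.sum_mul, mul_assoc]
  rw [hcoord]
  by_cases hts : t = s
  · simp [hts]
  · rw [sum_character_apply_eq_zero (by rwa [Ne, inv_mul_eq_one, eq_comm])]
    simp [hts]

lemma weylRep_single [DecidableEq L] (a s : L) :
    weylRep (a, 1) (EuclideanSpace.single s 1) = EuclideanSpace.single (a * s) 1 := by
  ext t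
  simp [weylRep_apply, inv_mul_eq_iff_eq_mul]

lemma isIrreducibleRep_weylRep : IsIrreducibleRep (weylRep (L := L)) := by
  classical
  intro K _ hK
  refine or_iff_not_imp_left.mpr fun hne => ?_
  obtain ⟨f, hf, hf0⟩ := K.exists_mem_ne_zero_of_ne_bot hne
  obtain ⟨s, hs⟩ : ∃ s, f s ≠ 0 := by
    by_contra! h
    exact hf0 (PiLp.ext h)
  have := Fintype.ofFinite (L →* ℂˣ)
  have hsingle : EuclideanSpace.single s (1 : ℂ) ∈ K := by
    have hcard : (Fintype.card (L →* ℂˣ) : ℂ) ≠ 0 := Nat.cast_ne_zero.mpr Fintype.card_ne_zero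
    refine (K.smul_mem_iff (mul_ne_zero hcard hs)).mp ?_
    rw [← sum_smul_weylRep]
    exact K.sum_mem fun χ _ => K.smul_mem _ (hK _ f hf)
  have hbasis (t : L) : EuclideanSpace.single t (1 : ℂ) ∈ K := by
    simpa [weylRep_single] using hK (t * s⁻¹, 1) _ hsingle
  refine eq_top_iff.mpr fun g _ => ?_
  rw [← (EuclideanSpace.basisFun L ℂ).sum_repr g]
  exact K.sum_mem fun t _ => K.smul_mem _ (by simpa using hbasis t)

theorem exists_isIrreducibleRep_pFaithful_of_mulEquiv_prod_self {G : Type*} [Group G]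
    (e : G ≃* L × L) :
    ∃ π : G → (EuclideanSpace ℂ L →L[ℂ] EuclideanSpace ℂ L),
      IsProjUnitaryRep π ∧ IsIrreducibleRep π ∧ PFaithful π := by
  obtain ⟨d⟩ := CommGroup.monoidHom_mulEquiv_of_hasEnoughRootsOfUnity L ℂ
  let E : G ≃* L × (L →* ℂˣ) := e.trans ((MulEquiv.refl L).prodCongr d.symm)
  let f : G →* L × (L →* ℂˣ) := E
  exact ⟨weylRep ∘ f, isProjUnitaryRep_weylRep.comp f, isIrreducibleRep_weylRep.comp E.surjective,
    pFaithful_weylRep.comp (f := f) E.injective⟩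

end WeylRep

/-- Frucht's theorem: a finite abelian group has an irreducible projectively faithful
projective unitary representation iff it is isomorphic to `L × L` for some finite abelian
group `L`. -/
theorem stmt_19 (Γ : Type) [CommGroup Γ] [Finite Γ] :
    (∃ (H : Type) (_ : NormedAddCommGroup H) (_ : InnerProductSpace ℂ H) (_ : CompleteSpace H)
        (π : Γ → (H →L[ℂ] H)),
        IsProjUnitaryRep π ∧ IsIrreducibleRep π ∧ PFaithful π) ↔
      ∃ (L : Type) (_ : CommGroup L) (_ : Finite L), Nonempty (Γ ≃* L × L) := by
  constructor
  · rintro ⟨H, _, _, _, π, hπ, hirr, hfaith⟩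
    exact hπ.exists_mulEquiv_prod_self hirr hfaith
  · rintro ⟨L, _, _, ⟨e⟩⟩
    have := Fintype.ofFinite L
    exact ⟨EuclideanSpace ℂ L, _, _, inferInstance,
      exists_isIrreducibleRep_pFaithful_of_mulEquiv_prod_self e⟩
end
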